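/- arXiv:1012.3180 — 4 statements merged into one kernel-verified Lean document; each statement's English description precedes it below -/
import Mathlib

section
/- Let ∇ be an L-connection on an R-module M. For every p-form α of L (with values in R) and every M-valued q-form ω of L, the covariant exterior derivative satisfies the graded Leibniz rule d^∇(α ∧ ω) = d_Lα ∧ ω + (−1)^p α ∧ d^∇ω. -/
open scoped BigOperators

noncomputable section

/-- A Lie–Rinehart algebra structure on an `R`-module `L` with a `K`-Lie algebra bracket:
the `R`-linear anchor `a : L →ₗ[R] Der_K(R)` is a morphism of Lie algebras over `K` and
satisfies the Leibniz rule `⁅x, f • y⁆ = f • ⁅x, y⁆ + (a x f) • y`. -/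
structure IsLieRinehart {K R L : Type*} [CommRing K] [CommRing R] [Algebra K R]
    [LieRing L] [Module R L]
    (a : L →ₗ[R] Derivation K R R) : Prop where
  map_bracket : ∀ x y : L, a ⁅x, y⁆ = ⁅a x, a y⁆
  leibniz : ∀ (x y : L) (f : R), ⁅x, f • y⁆ = f • ⁅x, y⁆ + a x f • y

/-- The `k`-tuple `(⁅ξ i, ξ j⁆, ξ 0, …, ξ̂ i, …, ξ̂ j, …, ξ k)` obtained from a
`(k+1)`-tuple `ξ` by removing the entries at positions `i < j` and prepending the
bracket `⁅ξ i, ξ j⁆`. -/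
def braTuple {L : Type*} [LieRing L] {k : ℕ} (ξ : Fin (k + 1) → L)
    (i j : Fin (k + 1)) : Fin k → L := fun m =>
  if (m : ℕ) = 0 then ⁅ξ i, ξ j⁆
  else ξ ⟨if (m : ℕ) - 1 < (i : ℕ) then (m : ℕ) - 1
          else if (m : ℕ) < (j : ℕ) then (m : ℕ) else (m : ℕ) + 1,
        by have := m.isLt; split_ifs <;> omega⟩

/-- The raw (Lie–Rinehart/covariant exterior) differential of a
`k`-cochain with values in `N`, with respect to an operator `D : L → N → N`:
`(dω)(ξ₀,…,ξ_k) = Σᵢ (−1)ⁱ D (ξ i) (ω (…ξ̂ᵢ…)) + Σ_{i<j} (−1)^{i+j} ω (⁅ξᵢ,ξⱼ⁆, …ξ̂ᵢ…ξ̂ⱼ…)`. -/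
def covDRaw {L N : Type*} [LieRing L] [AddCommGroup N]
    (D : L → N → N) {k : ℕ} (ω : (Fin k → L) → N) : (Fin (k + 1) → L) → N := fun ξ =>
  (∑ i : Fin (k + 1), (-1 : ℤ) ^ (i : ℕ) • D (ξ i) (ω (ξ ∘ i.succAbove)))
    + ∑ i : Fin (k + 1), ∑ j : Fin (k + 1),
        if i < j then (-1 : ℤ) ^ ((i : ℕ) + (j : ℕ)) • ω (braTuple ξ i j) else 0

/-- The raw Lie–Rinehart differential `d_L` on `R`-valued cochains. -/
def dLRaw {K R L : Type*} [CommRing K] [CommRing R] [Algebra K R]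
    [LieRing L] [Module R L] (a : L →ₗ[R] Derivation K R R) {k : ℕ}
    (ω : (Fin k → L) → R) : (Fin (k + 1) → L) → R :=
  covDRaw (fun x f => a x f) ω

/-- An `L`-connection on an `R`-module `M` relative to the anchor `a`:
a `K`-bilinear map `D : L × M → M` with `D (f • x) m = f • D x m` and
`D x (f • m) = (a x f) • m + f • D x m`. -/
structure IsConnection {K R L M : Type*} [CommRing K] [CommRing R] [Algebra K R]
    [LieRing L] [Module R L] [Module K L]
    [AddCommGroup M] [Module R M] [Module K M]
    (a : L →ₗ[R] Derivation K R R) (D : L → M → M) : Prop where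
  add_left : ∀ (x y : L) (m : M), D (x + y) m = D x m + D y m
  add_right : ∀ (x : L) (m n : M), D x (m + n) = D x m + D x n
  smul_left_k : ∀ (c : K) (x : L) (m : M), D (c • x) m = c • D x m
  smul_right_k : ∀ (c : K) (x : L) (m : M), D x (c • m) = c • D x m
  smul_left : ∀ (f : R) (x : L) (m : M), D (f • x) m = f • D x m
  leibniz : ∀ (f : R) (x : L) (m : M), D x (f • m) = a x f • m + f • D x m

/-- The raw action of an `R`-valued `p`-cochain on an `M`-valued `q`-cochain:
`(α ∧ ω)(ξ) = (1/(p!·q!)) Σ_σ sign σ · α(ξ_{σ(1)},…,ξ_{σ(p)}) • ω(ξ_{σ(p+1)},…,ξ_{σ(p+q)})`. -/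
def wedgeRawSMul (K : Type*) {R L M : Type*} [Field K] [CommRing R] [Algebra K R]
    [AddCommGroup M] [Module R M] [Module K M] {p q : ℕ}
    (α : (Fin p → L) → R) (ω : (Fin q → L) → M) : (Fin (p + q) → L) → M := fun ξ =>
  (((p.factorial * q.factorial : ℕ) : K))⁻¹ •
    ∑ σ : Equiv.Perm (Fin (p + q)), (Equiv.Perm.sign σ : ℤ) •
      (α (fun i => ξ (σ (Fin.castAdd q i))) • ω (fun i => ξ (σ (Fin.natAdd p i))))

namespace LRAux

open Equiv

def altS {X N : Type*} [AddCommGroup N] {n : ℕ} (f : (Fin n → X) → N) (ξ : Fin n → X) : N :=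
  ∑ σ : Perm (Fin n), (Perm.sign σ : ℤ) • f (fun i => ξ (σ i))

def ext1 {n : ℕ} (e : Perm (Fin n)) : Perm (Fin (n + 1)) := Perm.decomposeFin.symm (0, e)

theorem ext1_zero {n : ℕ} (e : Perm (Fin n)) : ext1 e 0 = 0 := by simp [ext1]

theorem ext1_succ {n : ℕ} (e : Perm (Fin n)) (x : Fin n) : ext1 e x.succ = (e x).succ := by
  simp [ext1]

theorem ext1_sign {n : ℕ} (e : Perm (Fin n)) : Perm.sign (ext1 e) = Perm.sign e := by
  simp [ext1]

theorem sign_sq {n : ℕ} (e : Perm (Fin n)) : (Perm.sign e : ℤ) * (Perm.sign e : ℤ) = 1 := by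
  rcases Int.units_eq_one_or (Perm.sign e) with h | h <;> simp [h]

theorem sum_decomp {N : Type*} [AddCommGroup N] {n : ℕ} (F : Perm (Fin (n + 1)) → N) :
    ∑ σ, F σ = ∑ i : Fin (n + 1), ∑ e : Perm (Fin n), F (i.cycleRange.symm * ext1 e) := by
  rw [← Fintype.sum_prod_type' (fun (i : Fin (n + 1)) (e : Perm (Fin n)) =>
    F (i.cycleRange.symm * ext1 e))]
  symm
  apply Fintype.sum_bijective
    (fun x : Fin (n + 1) × Perm (Fin n) => (x.1.cycleRange.symm * ext1 x.2 : Perm (Fin (n + 1))))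
  · rw [Fintype.bijective_iff_injective_and_card]
    constructor
    · rintro ⟨i, e⟩ ⟨j, g⟩ h
      simp only at h
      have h0 : i = j := by
        have := congrArg (fun s : Perm (Fin (n + 1)) => s 0) h
        simpa [ext1_zero] using this
      subst h0
      have h1 := mul_left_cancel h
      have := Perm.decomposeFin.symm.injective h1
      simpa using this
    · exact (Fintype.card_congr Perm.decomposeFin).symm
  · intro x; rfl

theorem sum_decomp' {N : Type*} [AddCommGroup N] {n : ℕ} (F : Perm (Fin (n + 1)) → N) :
    ∑ σ, F σ = ∑ i : Fin (n + 1), ∑ e : Perm (Fin n), F (ext1 e * i.cycleRange) := by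
  rw [← Equiv.sum_comp (Equiv.inv (Perm (Fin (n + 1)))) F, sum_decomp]
  apply Finset.sum_congr rfl
  intro i _
  rw [← Equiv.sum_comp (Equiv.inv (Perm (Fin n)))]
  apply Finset.sum_congr rfl
  intro e _
  congr 1
  have h1 : ext1 e⁻¹ = (ext1 e)⁻¹ := by
    rw [eq_inv_iff_mul_eq_one]
    ext x
    refine Fin.cases ?_ (fun y => ?_) x
    · simp [ext1_zero]
    · simp [ext1_succ]
  simp only [Equiv.inv_apply, h1, mul_inv_rev, inv_inv]
  rfl

theorem altS_comp {X N : Type*} [AddCommGroup N] {n : ℕ} (f : (Fin n → X) → N)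
    (g : Perm (Fin n)) (ξ : Fin n → X) :
    altS (fun x => f (fun i => x (g i))) ξ = (Perm.sign g : ℤ) • altS f ξ := by
  unfold altS
  rw [← Equiv.sum_comp (Equiv.mulRight g) (fun σ : Perm (Fin n) =>
    (Perm.sign σ : ℤ) • f (fun i => ξ (σ i))), Finset.smul_sum]
  apply Finset.sum_congr rfl
  intro σ _
  simp only [Equiv.coe_mulRight, Perm.sign_mul, Units.val_mul, Perm.mul_apply, smul_smul]
  congr 1
  linear_combination (-(Perm.sign σ : ℤ)) * sign_sq g

theorem sign_cyc {n : ℕ} (i : Fin n) : (Perm.sign i.cycleRange : ℤ) = (-1) ^ (i : ℕ) := by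
  simp

theorem sign_cyc_symm {n : ℕ} (i : Fin n) :
    (Perm.sign i.cycleRange.symm : ℤ) = (-1) ^ (i : ℕ) := by
  simp [Perm.sign_symm]

theorem cyc_val {n : ℕ} (i t : Fin n) : (i.cycleRange t : ℕ) =
    if (t : ℕ) < i then (t : ℕ) + 1 else if (t : ℕ) = i then 0 else t := by
  split_ifs with h1 h2
  · exact Fin.coe_cycleRange_of_lt h1
  · rw [Fin.coe_cycleRange_of_le (by rw [Fin.le_def]; omega), if_pos (Fin.ext h2)]
  · rw [Fin.cycleRange_of_gt (by rw [Fin.lt_def]; omega)]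

theorem altS_add {X N : Type*} [AddCommGroup N] {n : ℕ} (f g : (Fin n → X) → N) (ξ : Fin n → X) :
    altS (fun x => f x + g x) ξ = altS f ξ + altS g ξ := by
  simp [altS, Finset.sum_add_distrib]

theorem altS_zsmul {X N : Type*} [AddCommGroup N] {n : ℕ} (c : ℤ) (f : (Fin n → X) → N)
    (ξ : Fin n → X) :
    altS (fun x => c • f x) ξ = c • altS f ξ := by
  simp only [altS, Finset.smul_sum]
  exact Finset.sum_congr rfl fun σ _ => smul_comm _ _ _

theorem altS_succ {X N : Type*} [AddCommGroup N] {n : ℕ} (f : (Fin (n + 1) → X) → N)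
    (ξ : Fin (n + 1) → X) :
    altS f ξ = ∑ i : Fin (n + 1), (-1 : ℤ) ^ (i : ℕ) • ∑ e : Perm (Fin n), (Perm.sign e : ℤ) •
      f (fun t => ξ (i.cycleRange.symm (ext1 e t))) := by
  unfold altS
  rw [sum_decomp]
  apply Finset.sum_congr rfl
  intro i _
  rw [Finset.smul_sum]
  apply Finset.sum_congr rfl
  intro e _
  rw [smul_smul, Perm.sign_mul, Units.val_mul, sign_cyc_symm, ext1_sign]
  rfl

theorem altS_cast {X N : Type*} [AddCommGroup N] {n m : ℕ} (h : n = m) (f : (Fin n → X) → N)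
    (ξ : Fin m → X) :
    altS f (fun i => ξ (Fin.cast h i)) = altS (fun x => f (fun i => x (Fin.cast h i))) ξ := by
  subst h; rfl

theorem ext_left {p q : ℕ} (e : Perm (Fin p)) : ∃ E : Perm (Fin (p + q)),
    Perm.sign E = Perm.sign e ∧ (∀ t, E (Fin.castAdd q t) = Fin.castAdd q (e t)) ∧
    ∀ t, E (Fin.natAdd p t) = Fin.natAdd p t :=
  ⟨finSumFinEquiv.permCongr (Equiv.Perm.sumCongr e 1), by
    rw [Perm.sign_permCongr, Perm.sign_sumCongr]; simp, by
    intro t; simp [Equiv.permCongr_apply], by intro t; simp [Equiv.permCongr_apply]⟩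

theorem ext_right {p q : ℕ} (e : Perm (Fin q)) : ∃ E : Perm (Fin (p + q)),
    Perm.sign E = Perm.sign e ∧ (∀ t, E (Fin.castAdd q t) = Fin.castAdd q t) ∧
    ∀ t, E (Fin.natAdd p t) = Fin.natAdd p (e t) :=
  ⟨finSumFinEquiv.permCongr (Equiv.Perm.sumCongr 1 e), by
    rw [Perm.sign_permCongr, Perm.sign_sumCongr]; simp, by
    intro t; simp [Equiv.permCongr_apply], by intro t; simp [Equiv.permCongr_apply]⟩

theorem altS_left {X N : Type*} [AddCommGroup N] {p q : ℕ}
    (G : (Fin p → X) → (Fin q → X) → N) (e : Perm (Fin p)) (ξ : Fin (p + q) → X) :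
    altS (fun x => G (fun i => x (Fin.castAdd q (e i))) (fun j => x (Fin.natAdd p j))) ξ
      = (Perm.sign e : ℤ) •
        altS (fun x => G (fun i => x (Fin.castAdd q i)) (fun j => x (Fin.natAdd p j))) ξ := by
  obtain ⟨E, h1, h2, h3⟩ := ext_left (q := q) e
  rw [← h1, ← altS_comp]
  simp only [h2, h3]

theorem altS_right {X N : Type*} [AddCommGroup N] {p q : ℕ}
    (G : (Fin p → X) → (Fin q → X) → N) (e : Perm (Fin q)) (ξ : Fin (p + q) → X) :
    altS (fun x => G (fun i => x (Fin.castAdd q i)) (fun j => x (Fin.natAdd p (e j)))) ξ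
      = (Perm.sign e : ℤ) •
        altS (fun x => G (fun i => x (Fin.castAdd q i)) (fun j => x (Fin.natAdd p j))) ξ := by
  obtain ⟨E, h1, h2, h3⟩ := ext_right (p := p) e
  rw [← h1, ← altS_comp]
  simp only [h2, h3]

/-- tuple permutation `(i, i.succAbove j, rest)` -/
def tau {m : ℕ} (i : Fin (m + 2)) (j : Fin (m + 1)) : Perm (Fin (m + 2)) :=
  i.cycleRange.symm * ext1 j.cycleRange.symm

theorem tau_sign {m : ℕ} (i : Fin (m + 2)) (j : Fin (m + 1)) :
    (Perm.sign (tau i j) : ℤ) = (-1) ^ ((i : ℕ) + (j : ℕ)) := by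
  rw [tau, Perm.sign_mul, Units.val_mul, sign_cyc_symm, ext1_sign, sign_cyc_symm, pow_add]

theorem tau_zero {m : ℕ} (i : Fin (m + 2)) (j : Fin (m + 1)) : tau i j 0 = i := by
  simp [tau, ext1_zero]

theorem tau_one {m : ℕ} (i : Fin (m + 2)) (j : Fin (m + 1)) : tau i j 1 = i.succAbove j := by
  rw [tau, Perm.mul_apply, ← Fin.succ_zero_eq_one, ext1_succ]
  simp

theorem tau_ss {m : ℕ} (i : Fin (m + 2)) (j : Fin (m + 1)) (t : Fin m) :
    tau i j t.succ.succ = i.succAbove (j.succAbove t) := by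
  rw [tau, Perm.mul_apply, ext1_succ, Fin.cycleRange_symm_succ, Fin.cycleRange_symm_succ]

section bra
variable {L : Type*} [LieRing L]

theorem bra_zero {m : ℕ} (x : Fin (m + 2) → L) (i j : Fin (m + 2)) :
    braTuple x i j 0 = ⁅x i, x j⁆ := by simp [braTuple]

theorem b_succ {m : ℕ} (x : Fin (m + 2) → L) (t : Fin m) :
    braTuple x 0 1 t.succ = x t.succ.succ := by
  simp only [braTuple, Fin.val_succ]
  rw [if_neg (by omega)]
  congr 1

theorem bra_tau_lt {m : ℕ} (x : Fin (m + 2) → L) (i : Fin (m + 2)) (j : Fin (m + 1))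
    (h : i < i.succAbove j) :
    braTuple x i (i.succAbove j) = braTuple (fun t => x (tau i j t)) 0 1 := by
  funext t
  refine Fin.cases ?_ (fun t => ?_) t
  · rw [bra_zero, bra_zero, tau_zero, tau_one]
  · rw [b_succ, tau_ss]
    simp only [braTuple, Fin.val_succ]
    rw [if_neg (by omega)]
    congr 1
    ext
    simp only [Fin.succAbove, Fin.lt_def, Fin.val_castSucc] at h ⊢
    split_ifs at h ⊢ <;> simp at * <;> omega

theorem bra_tau_gt {m : ℕ} (x : Fin (m + 2) → L) (i : Fin (m + 2)) (j : Fin (m + 1))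
    (h : i.succAbove j < i) :
    braTuple (fun t => x (tau i j t)) 0 1 =
      Function.update (braTuple x (i.succAbove j) i) 0 (-⁅x (i.succAbove j), x i⁆) := by
  funext t
  refine Fin.cases ?_ (fun t => ?_) t
  · rw [bra_zero, tau_zero, tau_one]; simp
  · rw [b_succ, tau_ss, Function.update_of_ne (Fin.succ_ne_zero t)]
    simp only [braTuple, Fin.val_succ]
    rw [if_neg (by omega)]
    congr 1
    ext
    simp only [Fin.succAbove, Fin.lt_def, Fin.val_castSucc] at h ⊢
    split_ifs at h ⊢ <;> simp at * <;> omega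

end bra

theorem ext1_mul {n : ℕ} (a b : Perm (Fin n)) : ext1 (a * b) = ext1 a * ext1 b := by
  ext x
  refine Fin.cases ?_ (fun y => ?_) x
  · simp [ext1_zero]
  · simp [ext1_succ]

theorem altS_two {X N : Type*} [AddCommGroup N] {m : ℕ} (f : (Fin (m + 2) → X) → N)
    (ξ : Fin (m + 2) → X) :
    altS f ξ = ∑ i : Fin (m + 2), ∑ j : Fin (m + 1), (-1 : ℤ) ^ ((i : ℕ) + (j : ℕ)) •
      ∑ e : Perm (Fin m), (Perm.sign e : ℤ) •
      f (fun t => ξ (tau i j (ext1 (ext1 e) t))) := by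
  rw [altS_succ]
  apply Finset.sum_congr rfl
  intro i _
  rw [sum_decomp, Finset.smul_sum]
  apply Finset.sum_congr rfl
  intro j _
  rw [pow_add, mul_smul]
  congr 1
  rw [Finset.smul_sum]
  apply Finset.sum_congr rfl
  intro e _
  rw [smul_smul, Perm.sign_mul, Units.val_mul, sign_cyc_symm, ext1_sign]
  simp only [ext1_mul, tau]
  rfl

section bra2
variable {L : Type*} [LieRing L]

theorem b_ext {m : ℕ} (x : Fin (m + 2) → L) (e : Perm (Fin m)) (t : Fin (m + 1)) :
    braTuple (fun t => x (ext1 (ext1 e) t)) 0 1 t = braTuple x 0 1 (ext1 e t) := by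
  refine Fin.cases ?_ (fun t => ?_) t
  · rw [ext1_zero, bra_zero, bra_zero, ext1_zero, ← Fin.succ_zero_eq_one, ext1_succ, ext1_zero]
  · rw [b_succ, ext1_succ, ext1_succ, b_succ]

theorem exists_tau {k : ℕ} (i j : Fin (k + 1)) (h : i < j) : ∃ e : Perm (Fin (k + 1)),
    (Perm.sign e : ℤ) = - (-1) ^ ((i : ℕ) + (j : ℕ)) ∧
    ∀ x : Fin (k + 1) → L, braTuple x i j = braTuple (fun t => x (e t)) 0 1 := by
  cases k with
  | zero => exact absurd h (by omega)
  | succ m =>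
    obtain ⟨j', rfl⟩ := Fin.exists_succAbove_eq (ne_of_gt h)
    refine ⟨tau i j', ?_, fun x => bra_tau_lt x i j' h⟩
    rw [tau_sign]
    have : ((i.succAbove j' : Fin (m + 2)) : ℕ) = j' + 1 := by
      simp only [Fin.succAbove, Fin.lt_def, Fin.val_castSucc] at h ⊢
      split_ifs at h ⊢ <;> simp at * ; omega
    rw [this, ← add_assoc, pow_succ]
    ring

theorem count_lt {M' : Type*} [AddCommGroup M'] (n : ℕ) (X : M') :
    (2 : ℤ) • (∑ i : Fin (n + 1), ∑ j : Fin (n + 1), if i < j then X else 0)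
      = ((n : ℤ) * (n + 1)) • X := by
  rw [Finset.sum_comm]
  have : ∀ j : Fin (n + 1), (∑ i : Fin (n + 1), if i < j then X else 0) = (j : ℕ) • X := by
    intro j
    rw [← Finset.sum_filter, Finset.sum_const]
    congr 1
    have : (Finset.univ.filter (fun i : Fin (n + 1) => i < j)) = Finset.Iio j := by
      ext; simp
    rw [this, Fin.card_Iio]
  simp only [this]
  rw [← Finset.sum_smul, Fin.sum_univ_eq_sum_range (fun i => i), ← natCast_zsmul, smul_smul]
  congr 1
  have := Finset.sum_range_id_mul_two (n + 1)
  simp only [Nat.add_sub_cancel] at this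
  have h2 : ((∑ i ∈ Finset.range (n + 1), i : ℕ) : ℤ) * 2 = (n + 1) * n := by exact_mod_cast this
  linarith

theorem Q_covD {N M' : Type*} [AddCommGroup N] [AddCommGroup M'] {k : ℕ} (D : L → N → N)
    (f : (Fin k → L) → N) (Q : ((Fin (k + 1) → L) → N) →+ M')
    (hQ : ∀ (g : (Fin (k + 1) → L) → N) (e : Perm (Fin (k + 1))),
      Q (fun y => g (fun i => y (e i))) = (Perm.sign e : ℤ) • Q g) :
    (2 : ℤ) • Q (covDRaw D f) = (2 * ((k : ℤ) + 1)) • Q (fun y => D (y 0) (f (fun i => y i.succ)))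
      - ((k : ℤ) * (k + 1)) • Q (fun y => f (braTuple y 0 1)) := by
  have h1 : covDRaw D f = (∑ i : Fin (k + 1), (-1 : ℤ) ^ (i : ℕ) •
      (fun y : Fin (k + 1) → L => D (y (i.cycleRange.symm 0))
        (f (fun t => y (i.cycleRange.symm t.succ)))))
      + ∑ i : Fin (k + 1), ∑ j : Fin (k + 1),
        if i < j then (-1 : ℤ) ^ ((i : ℕ) + (j : ℕ)) •
          (fun y : Fin (k + 1) → L => f (braTuple y i j)) else 0 := by
    funext y
    simp only [covDRaw, Pi.add_apply, Finset.sum_apply, Pi.smul_apply, Fin.cycleRange_symm_zero,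
      Fin.cycleRange_symm_succ]
    congr 1
    refine Finset.sum_congr rfl fun i _ => Finset.sum_congr rfl fun j _ => ?_
    split_ifs <;> rfl
  rw [h1, map_add, map_sum, map_sum, smul_add, sub_eq_add_neg, ← smul_neg, ← count_lt]
  congr 1
  · rw [mul_smul]
    congr 1
    rw [Finset.sum_congr rfl (g := fun _ => Q (fun y => D (y 0) (f (fun i => y i.succ))))]
    · rw [Finset.sum_const, ← natCast_zsmul]; simp
    · intro i _
      rw [map_zsmul, hQ (fun y => D (y 0) (f (fun i => y i.succ))) i.cycleRange.symm,
        sign_cyc_symm, smul_smul, ← mul_pow]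
      simp
  · congr 1
    apply Finset.sum_congr rfl
    intro i _
    rw [map_sum]
    apply Finset.sum_congr rfl
    intro j _
    split_ifs with h
    · obtain ⟨e, he, hb⟩ := exists_tau (L := L) i j h
      simp only [hb]
      rw [map_zsmul, hQ (fun y => f (braTuple y 0 1)) e, he, smul_smul, mul_neg, ← mul_pow]
      simp
    · exact map_zero Q

theorem bra_W {R M : Type*} [CommRing R] [Module R L] [AddCommGroup M] [Module R M] {n : ℕ}
    (W : AlternatingMap R L M (Fin n)) (f : (Fin n → L) → M) (hW : ∀ y, W y = altS f y)
    (ξ : Fin (n + 1) → L) :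
    (2 : ℤ) • (∑ i : Fin (n + 1), ∑ j : Fin (n + 1),
        if i < j then (-1 : ℤ) ^ ((i : ℕ) + (j : ℕ)) • W (braTuple ξ i j) else 0)
      = - ∑ r : Fin n, (-1 : ℤ) ^ (r : ℕ) •
          altS (fun x => f (fun t => braTuple x 0 1 (r.cycleRange t))) ξ := by
  cases n with
  | zero => simp
  | succ m =>
    set T : Fin (m + 2) → Fin (m + 2) → M := fun i j =>
      if i < j then (-1 : ℤ) ^ ((i : ℕ) + (j : ℕ)) • W (braTuple ξ i j) else 0 with hT
    have e1 : (2 : ℤ) • (∑ i, ∑ j, T i j) = ∑ i, ∑ j, (T i j + T j i) := by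
      simp only [Finset.sum_add_distrib]
      rw [Finset.sum_comm (f := fun i j => T j i), two_smul]
    have e2 : ∀ i : Fin (m + 2), ∑ j, (T i j + T j i) =
        - ∑ j : Fin (m + 1), (-1 : ℤ) ^ ((i : ℕ) + (j : ℕ)) •
          W (braTuple (fun t => ξ (tau i j t)) 0 1) := by
      intro i
      rw [Fin.sum_univ_succAbove _ i]
      have : T i i = 0 := by simp [hT]
      rw [this, add_zero, zero_add, ← Finset.sum_neg_distrib]
      apply Finset.sum_congr rfl
      intro j _
      rcases lt_or_gt_of_ne (Fin.succAbove_ne i j) with h | h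
      · rw [bra_tau_gt ξ i j h, AlternatingMap.map_update_neg]
        have h3 : Function.update (braTuple ξ (i.succAbove j) i) 0 ⁅ξ (i.succAbove j), ξ i⁆
            = braTuple ξ (i.succAbove j) i := by
          rw [← bra_zero, Function.update_eq_self]
        have h4 : ((i.succAbove j : Fin (m + 2)) : ℕ) = j := by
          simp only [Fin.succAbove, Fin.lt_def, Fin.val_castSucc] at h ⊢
          split_ifs at h ⊢ <;> simp at * ; omega
        rw [h3]
        simp only [hT]
        rw [if_neg (not_lt_of_gt h), if_pos h, h4, zero_add, smul_neg, neg_neg, add_comm (j : ℕ)]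
      · rw [← bra_tau_lt ξ i j h]
        have h4 : ((i.succAbove j : Fin (m + 2)) : ℕ) = j + 1 := by
          simp only [Fin.succAbove, Fin.lt_def, Fin.val_castSucc] at h ⊢
          split_ifs at h ⊢ <;> simp at * ; omega
        simp only [hT]
        rw [if_neg (not_lt_of_gt h), if_pos h, h4, add_zero, ← add_assoc, pow_succ, mul_neg_one,
          neg_smul]
    have e3 : ∀ y : Fin (m + 2) → L, W (braTuple y 0 1) = ∑ r : Fin (m + 1), (-1 : ℤ) ^ (r : ℕ) •
        ∑ e : Perm (Fin m), (Perm.sign e : ℤ) •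
          f (fun t => braTuple (fun t => y (ext1 (ext1 e) t)) 0 1 (r.cycleRange t)) := by
      intro y
      rw [hW, altS, sum_decomp']
      apply Finset.sum_congr rfl
      intro r _
      rw [Finset.smul_sum]
      apply Finset.sum_congr rfl
      intro e _
      simp only [b_ext]
      rw [smul_smul, Perm.sign_mul, Units.val_mul, sign_cyc, ext1_sign, mul_comm]
      rfl
    rw [e1]
    simp only [e2, e3, altS_two]
    rw [Finset.sum_neg_distrib]
    congr 1
    simp only [Finset.smul_sum]
    symm
    rw [Finset.sum_comm]
    refine Finset.sum_congr rfl fun i _ => ?_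
    rw [Finset.sum_comm]
    refine Finset.sum_congr rfl fun j _ => Finset.sum_congr rfl fun r _ =>
      Finset.sum_congr rfl fun e _ => ?_
    rw [smul_comm]

theorem b_eq0 {k : ℕ} (x : Fin (k + 1) → L) (t : Fin k) (ht : (t : ℕ) = 0) (u v : Fin (k + 1))
    (hu : (u : ℕ) = 0) (hv : (v : ℕ) = 1) : braTuple x 0 1 t = ⁅x u, x v⁆ := by
  obtain ⟨m, rfl⟩ : ∃ m, k = m + 1 := ⟨k - 1, by have := t.isLt; omega⟩
  obtain rfl : t = 0 := Fin.ext ht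
  obtain rfl : u = 0 := Fin.ext hu
  obtain rfl : v = 1 := Fin.ext (by simpa using hv)
  rw [bra_zero]

theorem b_eqs {k : ℕ} (x : Fin (k + 1) → L) (t : Fin k) (ht : (t : ℕ) ≠ 0) (u : Fin (k + 1))
    (hu : (u : ℕ) = t + 1) : braTuple x 0 1 t = x u := by
  obtain ⟨m, rfl⟩ : ∃ m, k = m + 1 := ⟨k - 1, by have := t.isLt; omega⟩
  obtain ⟨s, rfl⟩ : ∃ s : Fin m, t = s.succ := Fin.exists_succ_eq.2 (fun h => ht (by simp [h]))|>.imp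
    fun _ h => h.symm
  obtain rfl : u = s.succ.succ := Fin.ext (by simpa using hu)
  rw [b_succ]

end bra2

theorem first_W {L M : Type*} [AddCommGroup M] {n : ℕ} (D : L → M → M)
    (hD : ∀ x m n, D x (m + n) = D x m + D x n) (f : (Fin n → L) → M)
    (ξ : Fin (n + 1) → L) :
    ∑ i : Fin (n + 1), (-1 : ℤ) ^ (i : ℕ) • D (ξ i) (altS f (ξ ∘ i.succAbove))
      = altS (fun x => D (x 0) (f (fun t => x t.succ))) ξ := by
  rw [altS_succ]
  refine Finset.sum_congr rfl fun i _ => ?_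
  congr 1
  let D' : M →+ M := AddMonoidHom.mk' (D (ξ i)) (hD (ξ i))
  change D' _ = _
  rw [altS, map_sum]
  refine Finset.sum_congr rfl fun e _ => ?_
  rw [map_zsmul]
  simp only [ext1_succ, ext1_zero, Fin.cycleRange_symm_zero, Fin.cycleRange_symm_succ]
  rfl

section main
variable {R L M : Type*} [CommRing R] [LieRing L] [Module R L] [AddCommGroup M] [Module R M]

theorem exists_W {p q : ℕ} (α : AlternatingMap R L R (Fin p)) (ω : AlternatingMap R L M (Fin q)) :
    ∃ W : AlternatingMap R L M (Fin (p + q)), ∀ y, W y = altS (fun x : Fin (p + q) → L =>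
      α (fun i => x (Fin.castAdd q i)) • ω (fun i => x (Fin.natAdd p i))) y := by
  refine ⟨MultilinearMap.alternatization (((TensorProduct.lid R M).toLinearMap.compMultilinearMap
    (MultilinearMap.domCoprod (α : MultilinearMap R (fun _ => L) R)
      (ω : MultilinearMap R (fun _ => L) M))).domDomCongr finSumFinEquiv), fun y => ?_⟩
  rw [MultilinearMap.alternatization_apply, altS]
  refine Finset.sum_congr rfl fun σ _ => ?_
  simp
  rfl

theorem rot_one {p q : ℕ} (α : AlternatingMap R L R (Fin p)) (ω : AlternatingMap R L M (Fin q))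
    (D : L → M → M) (ξ : Fin (p + q + 1) → L) :
    altS (fun x : Fin (p + q + 1) → L => α (fun i => x (Fin.castAdd q i).succ) •
        D (x 0) (ω (fun i => x (Fin.natAdd p i).succ))) ξ =
    (-1 : ℤ) ^ p • altS (n := p + (q + 1)) (fun x => α (fun i => x (Fin.castAdd (q + 1) i)) •
        D (x (Fin.natAdd p 0)) (ω (fun i => x (Fin.natAdd p i.succ)))) ξ := by
  have h := altS_comp (n := p + (q + 1)) (fun x => α (fun i => x (Fin.castAdd (q + 1) i)) •
        D (x (Fin.natAdd p 0)) (ω (fun i => x (Fin.natAdd p i.succ))))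
        (Fin.cycleRange ⟨p, by omega⟩) ξ
  rw [sign_cyc] at h
  rw [← h]
  congr 1
  funext x
  congr 1
  · congr 1; funext i; congr 1; ext; rw [cyc_val]; simp
  · congr 1
    · congr 1; ext; rw [cyc_val]; simp
    · congr 1; funext i; congr 1; ext; rw [cyc_val]; simp; omega

theorem rot_left {p q : ℕ} (α : AlternatingMap R L R (Fin p)) (ω : AlternatingMap R L M (Fin q))
    (hc : p + 1 + q = p + q + 1) (r : Fin p) (ξ : Fin (p + q + 1) → L) :
    (-1 : ℤ) ^ (r : ℕ) • altS (fun x : Fin (p + q + 1) → L =>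
      α (fun i => braTuple x 0 1 ((Fin.castAdd q r).cycleRange (Fin.castAdd q i))) •
      ω (fun i => braTuple x 0 1 ((Fin.castAdd q r).cycleRange (Fin.natAdd p i)))) ξ =
    altS (fun x : Fin (p + q + 1) → L =>
      α (braTuple (fun i => x (Fin.cast hc
        (Fin.castAdd q i))) 0 1) •
      ω (fun i => x (Fin.cast hc (Fin.natAdd (p + 1) i)))) ξ := by
  rw [← altS_zsmul]
  congr 1
  funext x
  obtain ⟨p, rfl⟩ : ∃ k, p = k + 1 := ⟨p - 1, by have := r.isLt; omega⟩
  set y := braTuple (fun i => x (Fin.cast hc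
        (Fin.castAdd q i))) 0 1 with hy
  have h1 : (fun i => braTuple x 0 1 ((Fin.castAdd q r).cycleRange (Fin.castAdd q i)))
      = y ∘ r.cycleRange := by
    funext i
    have : (Fin.castAdd q r).cycleRange (Fin.castAdd q i) = Fin.castAdd q (r.cycleRange i) := by
      ext; simp [cyc_val]
    rw [this, Function.comp]
    generalize r.cycleRange i = t
    rw [hy]
    by_cases h : (t : ℕ) = 0
    · rw [b_eq0 _ t h 0 1 (by simp) (by simp), b_eq0 x (Fin.castAdd q t) (by simpa using h)]
      · simp
      · simp
    · rw [b_eqs _ t h t.succ (by simp), b_eqs x (Fin.castAdd q t) (by simpa using h)]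
      simp
  rw [h1, AlternatingMap.map_perm, Units.smul_def, sign_cyc, smul_assoc, smul_smul, ← mul_pow]
  simp only [mul_neg, mul_one, neg_neg, one_pow, one_smul]
  congr 2
  funext i
  have : (Fin.castAdd q r).cycleRange (Fin.natAdd (p + 1) i) = Fin.natAdd (p + 1) i := by
    ext; rw [cyc_val]; have := r.isLt; simp only [Fin.val_natAdd, Fin.val_castAdd]
    split_ifs <;> omega
  rw [this]
  apply b_eqs
  · simp
  · simp; omega

theorem rot_right {p q : ℕ} (α : AlternatingMap R L R (Fin p)) (ω : AlternatingMap R L M (Fin q))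
    (r : Fin q) (ξ : Fin (p + q + 1) → L) :
    (-1 : ℤ) ^ ((Fin.natAdd p r : Fin (p + q)) : ℕ) • altS (fun x : Fin (p + q + 1) → L =>
      α (fun i => braTuple x 0 1 ((Fin.natAdd p r).cycleRange (Fin.castAdd q i))) •
      ω (fun i => braTuple x 0 1 ((Fin.natAdd p r).cycleRange (Fin.natAdd p i)))) ξ =
    (-1 : ℤ) ^ p • altS (n := p + (q + 1)) (fun x =>
      α (fun i => x (Fin.castAdd (q + 1) i)) •
      ω (braTuple (fun i => x (Fin.natAdd p i)) 0 1)) ξ := by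
  obtain ⟨q, rfl⟩ : ∃ k, q = k + 1 := ⟨q - 1, by have := r.isLt; omega⟩
  set c : Perm (Fin (p + (q + 1 + 1))) := Fin.cycleRange ⟨p + 1, by omega⟩ with hc
  have h := altS_comp (n := p + (q + 1 + 1)) (fun x => α (fun i => x (Fin.castAdd (q + 1 + 1) i)) •
      ω (braTuple (fun i => x (Fin.natAdd p i)) 0 1)) (c * c) ξ
  have hs : (Perm.sign (c * c) : ℤ) = 1 := by
    rw [Perm.sign_mul, Units.val_mul, sign_sq]
  rw [hs, one_smul] at h
  rw [← h, Fin.val_natAdd, pow_add, mul_smul]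
  congr 1
  rw [← altS_zsmul]
  congr 1
  funext x
  set y := braTuple (fun i => x ((c * c) (Fin.natAdd p i))) 0 1 with hy
  have hcv : ∀ t, ((c * c) t : ℕ) = if (t : ℕ) < p then (t : ℕ) + 2 else if (t : ℕ) = p then 0
      else if (t : ℕ) = p + 1 then 1 else t := by
    intro t
    rw [Perm.mul_apply, hc, cyc_val, cyc_val]
    simp only
    split_ifs <;> omega
  have h1 : (fun i => braTuple x 0 1 ((Fin.natAdd p r).cycleRange (Fin.natAdd p i)))
      = y ∘ r.cycleRange := by
    funext i
    rw [hy, Function.comp]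
    have hi := cyc_val r i
    have hj := cyc_val (Fin.natAdd p r) (Fin.natAdd p i)
    simp only [Fin.val_natAdd] at hj
    by_cases h0 : (i : ℕ) = r
    · rw [if_neg (by omega), if_pos h0] at hi
      rw [if_neg (by omega), if_pos (by omega)] at hj
      rw [b_eq0 _ _ hi 0 1 (by simp) (by simp)]
      apply b_eq0 _ _ hj
      · rw [hcv]; simp
      · rw [hcv]; simp
    · have hi0 : (r.cycleRange i : ℕ) ≠ 0 := by rw [hi]; split_ifs <;> omega
      have hij : ((Fin.natAdd p r).cycleRange (Fin.natAdd p i) : ℕ) = p + r.cycleRange i := by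
        rw [hi, hj]; split_ifs <;> omega
      rw [b_eqs _ _ hi0 (r.cycleRange i).succ (by simp)]
      apply b_eqs
      · omega
      · rw [hcv, hij]; simp only [Fin.val_natAdd, Fin.val_succ]
        split_ifs <;> omega
  have h2 : (fun i => braTuple x 0 1 ((Fin.natAdd p r).cycleRange (Fin.castAdd (q + 1) i)))
      = fun i => x ((c * c) (Fin.castAdd (q + 1 + 1) i)) := by
    funext i
    have hj := cyc_val (Fin.natAdd p r) (Fin.castAdd (q + 1) i)
    simp only [Fin.val_natAdd, Fin.val_castAdd] at hj
    have := i.isLt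
    rw [if_pos (by omega)] at hj
    apply b_eqs
    · omega
    · rw [hcv, hj]; simp
  rw [h1, h2, AlternatingMap.map_perm, Units.smul_def, sign_cyc,
    smul_comm (α _) ((-1 : ℤ) ^ (r : ℕ)), smul_smul, ← mul_pow]
  simp

end main

end LRAux

/-- For an `L`-connection `∇` on `M`, every `p`-form `α` of `L` and every `M`-valued
`q`-form `ω` of `L`, the covariant exterior derivative satisfies the graded Leibniz
rule `d^∇(α ∧ ω) = d_L α ∧ ω + (−1)^p α ∧ d^∇ ω`. -/
theorem lieRinehart_covariant_derivative_graded_leibniz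
    {K R L M : Type*} [Field K] [CharZero K] [CommRing R] [Algebra K R]
    [LieRing L] [Module R L] [Module K L] [IsScalarTower K R L] [LieAlgebra K L]
    [AddCommGroup M] [Module R M] [Module K M] [IsScalarTower K R M]
    (a : L →ₗ[R] Derivation K R R) (ha : IsLieRinehart a)
    (D : L → M → M) (hD : IsConnection a D)
    (p q : ℕ) (α : AlternatingMap R L R (Fin p)) (ω : AlternatingMap R L M (Fin q)) :
    ∀ ξ : Fin (p + q + 1) → L,
      covDRaw D (wedgeRawSMul K ⇑α ⇑ω) ξ
        = wedgeRawSMul K (dLRaw a ⇑α) ⇑ω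
            (fun i => ξ (Fin.cast (show p + 1 + q = p + q + 1 by omega) i))
          + (-1 : ℤ) ^ p • wedgeRawSMul K ⇑α (covDRaw D ⇑ω) ξ := by
  intro ξ
  obtain ⟨W, hW⟩ := LRAux.exists_W α ω
  have hcast : p + 1 + q = p + q + 1 := by omega
  set X1 := LRAux.altS (fun x : Fin (p + 1 + q) → L =>
    a (x (Fin.castAdd q 0)) (α (fun i => x (Fin.castAdd q i.succ))) •
      ω (fun j => x (Fin.natAdd (p + 1) j))) (fun i => ξ (Fin.cast hcast i)) with hX1
  set X2 := LRAux.altS (fun x : Fin (p + 1 + q) → L =>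
    α (braTuple (fun i => x (Fin.castAdd q i)) 0 1) •
      ω (fun j => x (Fin.natAdd (p + 1) j))) (fun i => ξ (Fin.cast hcast i)) with hX2
  set Y1 := LRAux.altS (n := p + (q + 1)) (fun x => α (fun i => x (Fin.castAdd (q + 1) i)) •
        D (x (Fin.natAdd p 0)) (ω (fun i => x (Fin.natAdd p i.succ)))) ξ with hY1
  set Y2 := LRAux.altS (n := p + (q + 1)) (fun x => α (fun i => x (Fin.castAdd (q + 1) i)) •
      ω (braTuple (fun i => x (Fin.natAdd p i)) 0 1)) ξ with hY2
  set A := LRAux.altS (fun x : Fin (p + 1 + q) → L =>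
    dLRaw a ⇑α (fun i => x (Fin.castAdd q i)) •
      ω (fun j => x (Fin.natAdd (p + 1) j))) (fun i => ξ (Fin.cast hcast i)) with hA
  set B := LRAux.altS (n := p + (q + 1)) (fun x => α (fun i => x (Fin.castAdd (q + 1) i)) •
      covDRaw D ⇑ω (fun i => x (Fin.natAdd p i))) ξ with hB
  have R1 : (2 : ℤ) • A = (2 * ((p : ℤ) + 1)) • X1 - ((p : ℤ) * (p + 1)) • X2 := by
    let Q : ((Fin (p + 1) → L) → R) →+ M := AddMonoidHom.mk' (fun g =>
      LRAux.altS (fun x : Fin (p + 1 + q) → L => g (fun i => x (Fin.castAdd q i)) •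
        ω (fun j => x (Fin.natAdd (p + 1) j))) (fun i => ξ (Fin.cast hcast i))) (by
        intro g h
        rw [← LRAux.altS_add]
        simp only [Pi.add_apply, add_smul])
    exact LRAux.Q_covD (fun x f => a x f) α Q (fun g e =>
      LRAux.altS_left (fun y z => g y • ω z) e (fun i => ξ (Fin.cast hcast i)))
  have R2 : (2 : ℤ) • B = (2 * ((q : ℤ) + 1)) • Y1 - ((q : ℤ) * (q + 1)) • Y2 := by
    let Q : ((Fin (q + 1) → L) → M) →+ M := AddMonoidHom.mk' (fun g =>
      LRAux.altS (n := p + (q + 1)) (fun x => α (fun i => x (Fin.castAdd (q + 1) i)) •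
        g (fun j => x (Fin.natAdd p j))) ξ) (by
        intro g h
        rw [← LRAux.altS_add]
        simp only [Pi.add_apply, smul_add])
    exact LRAux.Q_covD D ω Q (fun g e =>
      LRAux.altS_right (fun y z => α y • g z) e _)
  have L0 : covDRaw D (wedgeRawSMul K ⇑α ⇑ω) ξ
      = (((p.factorial * q.factorial : ℕ) : K))⁻¹ • covDRaw D W ξ := by
    have hw : ∀ y, wedgeRawSMul K ⇑α ⇑ω y = (((p.factorial * q.factorial : ℕ) : K))⁻¹ • W y := by
      intro y; rw [hW]; rfl
    simp only [covDRaw, hw, hD.smul_right_k, smul_add, Finset.smul_sum]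
    congr 1
    · exact Finset.sum_congr rfl fun i _ => smul_comm _ _ _
    · refine Finset.sum_congr rfl fun i _ => Finset.sum_congr rfl fun j _ => ?_
      split_ifs
      · exact smul_comm _ _ _
      · rw [smul_zero]
  have L1 : ∑ i : Fin (p + q + 1), (-1 : ℤ) ^ (i : ℕ) • D (ξ i) (W (ξ ∘ i.succAbove))
      = X1 + (-1 : ℤ) ^ p • Y1 := by
    simp only [hW]
    rw [LRAux.first_W D hD.add_right]
    simp only [hD.leibniz]
    rw [LRAux.altS_add, LRAux.rot_one, hX1, LRAux.altS_cast]
    congr 2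
    funext x
    have e1 : ∀ i : Fin q, (Fin.natAdd p i).succ = Fin.cast hcast (Fin.natAdd (p + 1) i) := by
      intro i
      ext
      simp
      omega
    simp only [e1]
    rfl
  have L2 : (2 : ℤ) • (∑ i : Fin (p + q + 1), ∑ j : Fin (p + q + 1),
        if i < j then (-1 : ℤ) ^ ((i : ℕ) + (j : ℕ)) • W (braTuple ξ i j) else 0)
      = - ((p : ℤ) • X2 + (q : ℤ) • (-1 : ℤ) ^ p • Y2) := by
    rw [LRAux.bra_W W _ hW, Fin.sum_univ_add]
    simp only [Fin.val_castAdd, LRAux.rot_left α ω hcast, LRAux.rot_right]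
    rw [hX2, LRAux.altS_cast]
    simp
    rfl
  rw [L0]
  have L3 : (2 : ℤ) • covDRaw D W ξ = (2 : ℤ) • (X1 + (-1 : ℤ) ^ p • Y1)
      - ((p : ℤ) • X2 + (q : ℤ) • (-1 : ℤ) ^ p • Y2) := by
    rw [covDRaw, smul_add, L1, L2, sub_eq_add_neg]
  change _ = ((((p + 1).factorial * q.factorial : ℕ) : K))⁻¹ • A
    + (-1 : ℤ) ^ p • ((((p.factorial * (q + 1).factorial : ℕ) : K))⁻¹ • B)
  generalize covDRaw D W ξ = C at L3
  clear_value X1 X2 Y1 Y2 A B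
  obtain ⟨s, hs⟩ : ∃ s : ℤ, s = (-1 : ℤ) ^ p := ⟨_, rfl⟩
  rw [← hs] at L3 ⊢
  clear hs
  simp only [← Int.cast_smul_eq_zsmul K] at R1 R2 L3 ⊢
  have hh : ∀ u v : M, ((2 : ℤ) : K) • u = v → u = (2 : K)⁻¹ • v := by
    intro u v h
    rw [← h, smul_smul]
    simp
  rw [hh _ _ R1, hh _ _ R2, hh _ _ L3]
  have hp : (p.factorial : K) ≠ 0 := Nat.cast_ne_zero.2 p.factorial_ne_zero
  have hq : (q.factorial : K) ≠ 0 := Nat.cast_ne_zero.2 q.factorial_ne_zero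
  have hp1 : (p : K) + 1 ≠ 0 := by exact_mod_cast Nat.succ_ne_zero p
  have hq1 : (q : K) + 1 ≠ 0 := by exact_mod_cast Nat.succ_ne_zero q
  rw [Nat.factorial_succ, Nat.factorial_succ]
  push_cast
  match_scalars <;> field_simp
end
end

section
/- Let ∇ be an L-connection on an R-module M and ∇^{End} the induced L-connection on End_R(M). For every End_R(M)-valued p-form ω and q-form τ of L, the covariant exterior derivative satisfies d^{∇^{End}}[ω, τ] = [d^{∇^{End}}ω, τ] + (−1)^p [ω, d^{∇^{End}}τ]. -/
open scoped BigOperators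

noncomputable section

/-- The induced operator `∇^End_x T = ∇ₓ ∘ T − T ∘ ∇ₓ` on maps `M → M`. -/
def endCommRaw {L M : Type*} [AddCommGroup M] (D : L → M → M) :
    L → (M → M) → (M → M) := fun x T m => D x (T m) - T (D x m)

/-- The raw graded bracket of two `End`-valued cochains (values as maps `M → M`):
`[ω, τ](ξ) = (1/(p!·q!)) Σ_σ sign σ · ⁅ω(ξ_{σ(1)},…,ξ_{σ(p)}), τ(ξ_{σ(p+1)},…,ξ_{σ(p+q)})⁆`,
using the commutator bracket. -/
def brWedgeRaw (K : Type*) {L M : Type*} [Field K] [AddCommGroup M] [Module K M]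
    {p q : ℕ} (ω : (Fin p → L) → (M → M)) (τ : (Fin q → L) → (M → M)) :
    (Fin (p + q) → L) → (M → M) := fun ξ =>
  (((p.factorial * q.factorial : ℕ) : K))⁻¹ •
    ∑ σ : Equiv.Perm (Fin (p + q)), (Equiv.Perm.sign σ : ℤ) •
      (fun m =>
        ω (fun i => ξ (σ (Fin.castAdd q i))) (τ (fun i => ξ (σ (Fin.natAdd p i))) m)
          - τ (fun i => ξ (σ (Fin.natAdd p i)))
              (ω (fun i => ξ (σ (Fin.castAdd q i))) m))


section Aux
open Equiv

theorem cast_pf (p q : ℕ) : p + 1 + q = p + q + 1 := Nat.add_right_comm p 1 q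

def altS {ι L A : Type*} [Fintype ι] [DecidableEq ι] [AddCommGroup A]
    (F : (ι → L) → A) (ξ : ι → L) : A :=
  ∑ σ : Equiv.Perm ι, (Equiv.Perm.sign σ : ℤ) • F (ξ ∘ σ)

theorem altS_perm {ι L A : Type*} [Fintype ι] [DecidableEq ι] [AddCommGroup A]
    (F : (ι → L) → A) (ρ : Equiv.Perm ι) (ξ : ι → L) :
    altS (fun v => F (v ∘ ρ)) ξ = (Equiv.Perm.sign ρ : ℤ) • altS F ξ := by
  unfold altS
  rw [Finset.smul_sum]
  conv_rhs => rw [← Equiv.sum_comp (Equiv.mulRight ρ)]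
  refine Finset.sum_congr rfl fun σ _ => ?_
  simp only [Equiv.coe_mulRight, Equiv.Perm.sign_mul, smul_smul, Units.val_mul]
  have h : (Perm.sign σ : ℤ) = Perm.sign ρ * (Perm.sign σ * Perm.sign ρ) := by
    rw [mul_left_comm, ← Units.val_mul, Int.units_mul_self]; simp
  rw [← h]
  rfl

theorem altS_equiv {ι κ L A : Type*} [Fintype ι] [DecidableEq ι] [Fintype κ] [DecidableEq κ]
    [AddCommGroup A] (F : (κ → L) → A) (e : κ ≃ ι) (ξ : ι → L) :
    altS F (ξ ∘ e) = altS (fun v => F (v ∘ e)) ξ := by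
  unfold altS
  rw [← Equiv.sum_comp e.permCongr]
  refine Finset.sum_congr rfl fun σ _ => ?_
  rw [Equiv.Perm.sign_permCongr]
  congr 2
  funext i
  simp [Equiv.permCongr_apply]

theorem altS_add {ι L A : Type*} [Fintype ι] [DecidableEq ι] [AddCommGroup A]
    (F G : (ι → L) → A) (ξ : ι → L) :
    altS (fun v => F v + G v) ξ = altS F ξ + altS G ξ := by
  simp [altS, Finset.sum_add_distrib]

theorem altS_zsmul {ι L A : Type*} [Fintype ι] [DecidableEq ι] [AddCommGroup A]
    (c : ℤ) (F : (ι → L) → A) (ξ : ι → L) :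
    altS (fun v => c • F v) ξ = c • altS F ξ := by
  simp only [altS, Finset.smul_sum]
  refine Finset.sum_congr rfl fun σ _ => ?_
  rw [smul_comm]

theorem altS_sum {ι κ L A : Type*} [Fintype ι] [DecidableEq ι] [AddCommGroup A]
    (s : Finset κ) (F : κ → (ι → L) → A) (ξ : ι → L) :
    altS (fun v => ∑ k ∈ s, F k v) ξ = ∑ k ∈ s, altS (F k) ξ := by
  simp only [altS, Finset.smul_sum]
  rw [Finset.sum_comm]

/-- extension of a permutation fixing 0 -/
def extP {n : ℕ} (σ : Perm (Fin n)) : Perm (Fin (n + 1)) := Perm.decomposeFin.symm (0, σ)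

theorem extP_zero {n : ℕ} (σ : Perm (Fin n)) : extP σ 0 = 0 := by simp [extP]
theorem extP_succ {n : ℕ} (σ : Perm (Fin n)) (i : Fin n) : extP σ i.succ = (σ i).succ := by
  simp [extP]
theorem extP_sign {n : ℕ} (σ : Perm (Fin n)) : Perm.sign (extP σ) = Perm.sign σ := by
  simp [extP]

theorem cyc_bij {n : ℕ} : Function.Bijective
    (fun x : Fin (n + 1) × Perm (Fin n) => x.1.cycleRange.symm * extP x.2) := by
  rw [Fintype.bijective_iff_injective_and_card]
  constructor
  · rintro ⟨i, σ⟩ ⟨j, τ⟩ h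
    have h0 := congrArg (fun f : Perm (Fin (n + 1)) => f 0) h
    simp only [Perm.mul_apply, extP_zero, Fin.cycleRange_symm_zero] at h0
    subst h0
    simp only [mul_right_inj] at h
    have := Perm.decomposeFin.symm.injective h
    simpa using this
  · simp [Fintype.card_perm, Nat.factorial_succ]

theorem altS_succ {n : ℕ} {L A : Type*} [AddCommGroup A]
    (F : (Fin (n + 1) → L) → A) (ξ : Fin (n + 1) → L) :
    altS F ξ = ∑ i : Fin (n + 1), (-1 : ℤ) ^ (i : ℕ) • ∑ σ : Perm (Fin n),
      (Perm.sign σ : ℤ) • F (Fin.cons (ξ i) (ξ ∘ i.succAbove ∘ σ)) := by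
  unfold altS
  rw [← (Equiv.ofBijective _ (cyc_bij (n := n))).sum_comp, Fintype.sum_prod_type]
  refine Finset.sum_congr rfl fun i _ => ?_
  rw [Finset.smul_sum]
  refine Finset.sum_congr rfl fun σ _ => ?_
  rw [smul_smul]
  congr 1
  · simp [Equiv.ofBijective_apply, Perm.sign_mul, extP_sign, Fin.sign_cycleRange]
  · congr 1
    funext k
    refine Fin.cases ?_ (fun k => ?_) k
    · simp [extP_zero, Perm.mul_apply]
    · simp [extP_succ, Perm.mul_apply]

theorem altS_succ' {n : ℕ} {L A : Type*} [AddCommGroup A]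
    (F : (Fin (n + 1) → L) → A) (ξ : Fin (n + 1) → L) :
    altS F ξ = ∑ i : Fin (n + 1), (-1 : ℤ) ^ (i : ℕ) • ∑ σ : Perm (Fin n),
      (Perm.sign σ : ℤ) • F (Fin.cons (α := fun _ => L) (ξ 0) (ξ ∘ Fin.succ ∘ σ) ∘ i.cycleRange) := by
  unfold altS
  rw [← Equiv.sum_comp (Equiv.inv _), ← (Equiv.ofBijective _ (cyc_bij (n := n))).sum_comp,
    Fintype.sum_prod_type]
  refine Finset.sum_congr rfl fun i _ => ?_
  rw [Finset.smul_sum, ← Equiv.sum_comp (Equiv.inv _)]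
  refine Finset.sum_congr rfl fun σ _ => ?_
  rw [smul_smul]
  congr 1
  · simp [Equiv.ofBijective_apply, Perm.sign_mul, extP_sign, Fin.sign_cycleRange, mul_comm]
  · congr 1
    have key : ∀ j, (extP σ⁻¹)⁻¹ j = extP σ j := by
      intro j
      rw [Perm.inv_eq_iff_eq]
      refine Fin.cases ?_ (fun k => ?_) j
      · simp [extP_zero]
      · simp [extP_succ]
    funext k
    simp only [Equiv.ofBijective_apply, Equiv.inv_apply, Function.comp, mul_inv_rev, Perm.mul_apply,
      key]
    have : (Equiv.symm i.cycleRange)⁻¹ k = i.cycleRange k := rfl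
    rw [this]
    generalize i.cycleRange k = j
    refine Fin.cases ?_ (fun k => ?_) j
    · simp [extP_zero]
    · simp [extP_succ]

theorem braTuple_zero {L : Type*} [LieRing L] {k : ℕ} (ξ : Fin (k + 2) → L) (i j : Fin (k + 2)) :
    braTuple ξ i j = Fin.cons (α := fun _ => L) ⁅ξ i, ξ j⁆ (fun m => braTuple ξ i j m.succ) := by
  funext m
  refine Fin.cases ?_ (fun k => ?_) m
  · simp [braTuple]
  · simp

theorem braTuple_succ1 {L : Type*} [LieRing L] {k : ℕ} (ξ : Fin (k + 2) → L) (j : Fin (k + 2))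
    (i : Fin (k + 1)) (h : j.succAbove i < j) (m : Fin k) :
    braTuple ξ (j.succAbove i) j m.succ = ξ (j.succAbove (i.succAbove m)) := by
  simp only [braTuple, Fin.val_succ, Nat.add_eq_zero_iff, one_ne_zero, and_false, if_false]
  congr 1
  ext
  simp only [Fin.succAbove, Fin.lt_def] at *
  grind

theorem braTuple_succ2 {L : Type*} [LieRing L] {k : ℕ} (ξ : Fin (k + 2) → L) (j : Fin (k + 2))
    (i : Fin (k + 1)) (h : j < j.succAbove i) (m : Fin k) :
    braTuple ξ j (j.succAbove i) m.succ = ξ (j.succAbove (i.succAbove m)) := by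
  simp only [braTuple, Fin.val_succ, Nat.add_eq_zero_iff, one_ne_zero, and_false, if_false]
  congr 1
  ext
  simp only [Fin.succAbove, Fin.lt_def] at *
  grind

theorem braTuple_01 {L : Type*} [LieRing L] {k : ℕ} (ξ : Fin (k + 2) → L) :
    braTuple ξ 0 1 = Fin.cons (α := fun _ => L) ⁅ξ 0, ξ 1⁆ (fun m => ξ m.succ.succ) := by
  rw [braTuple_zero]
  congr 1

/-- two-element extraction -/
theorem lemD {n : ℕ} {L A : Type*} [LieRing L] [AddCommGroup A]
    (H : L → (Fin n → L) → A) (hH : ∀ x u, H (-x) u = - H x u) (ξ : Fin (n + 2) → L) :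
    (2 : ℤ) • ∑ i : Fin (n + 2), ∑ j : Fin (n + 2), (if i < j then (-1 : ℤ) ^ ((i : ℕ) + (j : ℕ)) •
      ∑ σ : Perm (Fin n), (Perm.sign σ : ℤ) • H ⁅ξ i, ξ j⁆ ((fun m => braTuple ξ i j m.succ) ∘ σ)
      else 0) =
    - altS (fun v => H ⁅v 0, v 1⁆ (fun m => v m.succ.succ)) ξ := by
  set g : Fin (n + 2) → Fin (n + 2) → A := fun i j => (-1 : ℤ) ^ ((i : ℕ) + (j : ℕ)) •
      ∑ σ : Perm (Fin n), (Perm.sign σ : ℤ) • H ⁅ξ i, ξ j⁆ ((fun m => braTuple ξ i j m.succ) ∘ σ)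
    with hg
  have e1 : ∑ i : Fin (n + 2), ∑ j : Fin (n + 2), (if i < j then g i j else 0) =
      ∑ j : Fin (n + 2), ∑ i : Fin (n + 1),
        (if j.succAbove i < j then g (j.succAbove i) j else 0) := by
    rw [Finset.sum_comm]
    refine Finset.sum_congr rfl fun j _ => ?_
    rw [Fin.sum_univ_succAbove _ j]
    simp
  have e2 : ∑ i : Fin (n + 2), ∑ j : Fin (n + 2), (if i < j then g i j else 0) =
      ∑ j : Fin (n + 2), ∑ i : Fin (n + 1),
        (if j < j.succAbove i then g j (j.succAbove i) else 0) := by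
    refine Finset.sum_congr rfl fun j _ => ?_
    rw [Fin.sum_univ_succAbove _ j]
    simp
  rw [two_smul]
  nth_rewrite 1 [e1]
  rw [e2, ← Finset.sum_add_distrib, altS_succ, ← Finset.sum_neg_distrib]
  refine Finset.sum_congr rfl fun j _ => ?_
  have e3 := altS_succ (fun w : Fin (n + 1) → L => H ⁅ξ j, w 0⁆ (fun m => w m.succ))
    (ξ ∘ j.succAbove)
  unfold altS at e3
  simp only [Fin.cons_zero, Fin.cons_succ, Fin.cons_one] at e3 ⊢
  simp only [Function.comp_apply, Function.comp_def] at e3 ⊢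
  rw [e3, ← Finset.sum_add_distrib, Finset.smul_sum, ← Finset.sum_neg_distrib]
  refine Finset.sum_congr rfl fun i _ => ?_
  rcases lt_or_gt_of_ne (Fin.succAbove_ne j i) with h | h
  · rw [if_pos h, if_neg h.not_gt, add_zero, hg]
    simp only [Function.comp_def, braTuple_succ1 ξ j i h]
    have hv : ((j.succAbove i : Fin (n + 2)) : ℕ) = i := by
      simp only [Fin.succAbove, Fin.lt_def] at *
      grind
    rw [hv, ← lie_skew (ξ j)]
    simp only [hH, smul_neg, Finset.sum_neg_distrib, neg_neg, smul_smul, pow_add]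
    rw [mul_comm]
  · rw [if_pos h, if_neg h.not_gt, zero_add, hg]
    simp only [Function.comp_def, braTuple_succ2 ξ j i h]
    have hv : ((j.succAbove i : Fin (n + 2)) : ℕ) = i + 1 := by
      simp only [Fin.succAbove, Fin.lt_def] at *
      grind
    rw [hv]
    simp only [smul_smul, pow_add, pow_one, mul_neg, mul_one, neg_smul]

theorem lemE {n : ℕ} {L A : Type*} [LieRing L] [AddCommGroup A]
    (B : (Fin n → L) → A) (hB : ∀ w s, B (Function.update w s (- w s)) = - B w)
    (ξ : Fin (n + 1) → L) :
    (2 : ℤ) • ∑ i : Fin (n + 1), ∑ j : Fin (n + 1), (if i < j then (-1 : ℤ) ^ ((i : ℕ) + (j : ℕ)) •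
      altS B (braTuple ξ i j) else 0) =
    - ∑ s : Fin n, (-1 : ℤ) ^ (s : ℕ) •
      altS (fun v => B (braTuple v 0 1 ∘ s.cycleRange)) ξ := by
  cases n with
  | zero =>
    simp
  | succ n =>
    have h1 : ∀ s : Fin (n + 1), _ := fun s => lemD
      (fun x u => B (Fin.cons (α := fun _ => L) x u ∘ s.cycleRange)) (by
        intro x u
        rw [← hB _ s]
        congr 1
        funext m
        by_cases hm : m = s
        · subst hm; simp [Fin.cycleRange_self]
        · rw [Function.update_of_ne hm]
          have : s.cycleRange m ≠ 0 := by
            intro h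
            apply hm
            apply s.cycleRange.injective
            rw [h, Fin.cycleRange_self]
          obtain ⟨k, hk⟩ := Fin.exists_succ_eq.2 this
          simp [← hk]) ξ
    simp only [braTuple_01]
    rw [← Finset.sum_neg_distrib]
    have h2 : ∀ s : Fin (n + 1), -((-1 : ℤ) ^ (s : ℕ) • altS (fun v => B (Fin.cons (α := fun _ => L)
        ⁅v 0, v 1⁆ (fun m => v m.succ.succ) ∘ s.cycleRange)) ξ) = (-1 : ℤ) ^ (s : ℕ) • (2 : ℤ) • _ :=
      fun s => by rw [h1 s, smul_neg]
    rw [Finset.sum_congr rfl fun s _ => h2 s]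
    simp only [smul_comm _ (2 : ℤ), ← Finset.smul_sum]
    congr 1
    have h3 : ∀ (c : ℤ) (f : Fin (n + 2) → Fin (n + 2) → A),
        c • ∑ i, ∑ j, f i j = ∑ i, ∑ j, c • f i j := by
      intro c f; simp only [Finset.smul_sum]
    simp only [h3]
    symm
    rw [Finset.sum_comm]
    refine Finset.sum_congr rfl fun i _ => ?_
    rw [Finset.sum_comm]
    refine Finset.sum_congr rfl fun j _ => ?_
    split_ifs with h
    · rw [altS_succ' B, Finset.smul_sum]
      refine Finset.sum_congr rfl fun s _ => ?_
      rw [smul_comm]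
      rfl
    · simp

theorem exists_perm01 (L : Type*) [LieRing L] {k : ℕ} {i j : Fin (k + 1)} (h : i < j) :
    ∃ ρ : Perm (Fin (k + 1)), (Perm.sign ρ : ℤ) = - (-1) ^ ((i : ℕ) + (j : ℕ)) ∧
      ∀ (ξ : Fin (k + 1) → L), braTuple ξ i j = braTuple (ξ ∘ ρ) 0 1 := by
  cases k with
  | zero => exact absurd h (by omega)
  | succ k =>
    obtain ⟨i', rfl⟩ := Fin.exists_succAbove_eq h.ne
    have hv : ((j.succAbove i' : Fin (k + 2)) : ℕ) = i' := by
      simp only [Fin.succAbove, Fin.lt_def] at *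
      grind
    refine ⟨j.cycleRange.symm * i'.succ.cycleRange.symm, ?_, fun ξ => ?_⟩
    · rw [hv]
      simp [Perm.sign_mul, Fin.sign_cycleRange, pow_add, mul_comm]
    · have h1 : (1 : Fin (k + 2)) = Fin.succ 0 := rfl
      rw [braTuple_01, braTuple_zero]
      simp only [braTuple_succ1 ξ j i' h]
      simp [h1, Fin.cycleRange_symm_succ, Perm.mul_apply, -Fin.succ_zero_eq_one,
        -Fin.succ_zero_eq_one']

theorem lemR {k : ℕ} {ι L A A' : Type*} [LieRing L] [AddCommGroup A] [AddCommGroup A']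
    [Fintype ι] [DecidableEq ι] (Dl : L → A → A) (ω : (Fin k → L) → A)
    (c : Fin (k + 1) → ι) (G : (ι → L) → A →+ A')
    (hG : ∀ ρ : Perm (Fin (k + 1)), ∃ ρ' : Perm ι, Perm.sign ρ' = Perm.sign ρ ∧
      (∀ i, ρ' (c i) = c (ρ i)) ∧ ∀ v, G (v ∘ ρ') = G v) (ξ : ι → L) :
    altS (fun v => G v (covDRaw Dl ω (v ∘ c))) ξ =
      ((k + 1 : ℕ) : ℤ) • altS (fun v => G v (Dl (v (c 0)) (ω (fun i => v (c i.succ))))) ξ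
      - (((k + 1).choose 2 : ℕ) : ℤ) • altS (fun v => G v (ω (braTuple (v ∘ c) 0 1))) ξ := by
  simp only [covDRaw, map_add, map_sum, map_zsmul, altS_add, altS_sum, apply_ite (G _), map_zero]
  rw [sub_eq_add_neg]
  congr 1
  · have : ∀ i : Fin (k + 1), altS (fun v => (-1 : ℤ) ^ (i : ℕ) •
        G v (Dl ((v ∘ c) i) (ω ((v ∘ c) ∘ i.succAbove)))) ξ =
        altS (fun v => G v (Dl (v (c 0)) (ω (fun i => v (c i.succ))))) ξ := by
      intro i
      obtain ⟨ρ', h1, h2, h3⟩ := hG i.cycleRange.symm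
      have := altS_perm (fun v => G v (Dl (v (c 0)) (ω (fun i => v (c i.succ))))) ρ' ξ
      simp only [Function.comp_def] at h3
      rw [altS_zsmul]
      simp only [h3, Function.comp_def, h2, Fin.cycleRange_symm_zero,
        Fin.cycleRange_symm_succ] at this ⊢
      rw [this, h1, smul_smul]
      simp [Fin.sign_cycleRange, ← mul_pow]
    simp only [this]
    simp [← natCast_zsmul]
  · have : ∀ i j : Fin (k + 1), altS (fun v => if i < j then (-1 : ℤ) ^ ((i : ℕ) + (j : ℕ)) •
        G v (ω (braTuple (v ∘ c) i j)) else 0) ξ =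
        if i < j then - altS (fun v => G v (ω (braTuple (v ∘ c) 0 1))) ξ else 0 := by
      intro i j
      split_ifs with h
      · obtain ⟨ρ, hs, hρ⟩ := exists_perm01 L h
        obtain ⟨ρ', h1, h2, h3⟩ := hG ρ
        have := altS_perm (fun v => G v (ω (braTuple (v ∘ c) 0 1))) ρ' ξ
        simp only [Function.comp_def] at h3 hρ
        rw [altS_zsmul]
        simp only [hρ, h3, Function.comp_def, h2] at this ⊢
        rw [this, h1, hs, smul_smul]
        simp [← mul_pow]
      · simp [altS]
    simp only [this]
    rw [← Finset.sum_product', Finset.univ_product_univ, ← Finset.sum_filter, Finset.sum_const]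
    have hc : (Finset.univ.filter (fun x : Fin (k + 1) × Fin (k + 1) => x.1 < x.2)).card
        = (k + 1).choose 2 := by
      rw [Finset.card_filter, ← Finset.univ_product_univ, Finset.sum_product_right]
      simp only [← Finset.card_filter]
      have : ∀ j : Fin (k + 1), (Finset.univ.filter (fun i => i < j)).card = (j : ℕ) := by
        intro j
        rw [show Finset.univ.filter (fun i => i < j) = Finset.Iio j by ext; simp, Fin.card_Iio]
      simp only [this]
      rw [Fin.sum_univ_eq_sum_range (fun i => i), Finset.sum_range_id, Nat.choose_two_right]
    rw [hc]
    simp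

theorem exists_permL (p q : ℕ) (ρ : Perm (Fin p)) : ∃ ρ' : Perm (Fin (p + q)),
    Perm.sign ρ' = Perm.sign ρ ∧ (∀ i, ρ' (Fin.castAdd q i) = Fin.castAdd q (ρ i)) ∧
    ∀ i, ρ' (Fin.natAdd p i) = Fin.natAdd p i := by
  refine ⟨finSumFinEquiv.permCongr (Perm.sumCongr ρ 1), ?_, ?_, ?_⟩
  · simp [Perm.sign_permCongr, Perm.sign_sumCongr]
  · intro i; simp [Equiv.permCongr_apply]
  · intro i; simp [Equiv.permCongr_apply]

theorem exists_permR (p q : ℕ) (ρ : Perm (Fin q)) : ∃ ρ' : Perm (Fin (p + q)),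
    Perm.sign ρ' = Perm.sign ρ ∧ (∀ i, ρ' (Fin.castAdd q i) = Fin.castAdd q i) ∧
    ∀ i, ρ' (Fin.natAdd p i) = Fin.natAdd p (ρ i) := by
  refine ⟨finSumFinEquiv.permCongr (Perm.sumCongr 1 ρ), ?_, ?_, ?_⟩
  · simp [Perm.sign_permCongr, Perm.sign_sumCongr]
  · intro i; simp [Equiv.permCongr_apply]
  · intro i; simp [Equiv.permCongr_apply]

theorem braTuple_01_apply {L : Type*} [LieRing L] {k : ℕ} (v : Fin (k + 1) → L) (m : Fin k) :
    braTuple v 0 1 m = if (m : ℕ) = 0 then ⁅v ⟨0, by omega⟩, v ⟨1, by have := m.isLt; omega⟩⁆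
      else v ⟨m + 1, by omega⟩ := by
  have h1 : (1 : Fin (k + 1)) = ⟨1, by have := m.isLt; omega⟩ := by
    ext; simp; have := m.isLt; omega
  have h0 : (0 : Fin (k + 1)) = ⟨0, by omega⟩ := rfl
  rw [h1, h0]
  unfold braTuple
  by_cases h : (m : ℕ) = 0
  · simp [h]
  · simp only [if_neg h]
    congr 1
    ext
    grind

theorem cycleRange_val {n : ℕ} (s i : Fin n) : (s.cycleRange i : ℕ) =
    if (i : ℕ) < s then (i : ℕ) + 1 else if (i : ℕ) = s then 0 else i := by
  split_ifs with h1 h2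
  · rw [Fin.coe_cycleRange_of_lt h1]
  · have : i = s := Fin.ext h2
    subst this
    cases n with
    | zero => exact i.elim0
    | succ n => simp [Fin.cycleRange_self]
  · rw [Fin.cycleRange_of_gt]
    rw [Fin.lt_def]; omega

theorem neg_pow_mul_self (s : ℕ) : ((-1 : ℤ) ^ s) * (-1) ^ s = 1 := by
  rw [← mul_pow]; simp

theorem Y1_eq {L A : Type*} [LieRing L] [LieRing A] {p q : ℕ} (ω : (Fin p → L) → A)
    (τ : (Fin q → L) → A) (hω : ∀ (σ : Perm (Fin p)) v, ω (v ∘ σ) = (Perm.sign σ : ℤ) • ω v)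
    (ξ : Fin (p + q + 1) → L) (t : Fin p) :
    (-1 : ℤ) ^ (t : ℕ) • altS (fun v => ⁅ω ((braTuple v 0 1 ∘ (Fin.castAdd q t).cycleRange) ∘
        Fin.castAdd q), τ ((braTuple v 0 1 ∘ (Fin.castAdd q t).cycleRange) ∘ Fin.natAdd p)⁆) ξ =
    altS (fun v : Fin (p + 1 + q) → L => ⁅ω (braTuple (v ∘ Fin.castAdd q) 0 1),
      τ (v ∘ Fin.natAdd (p + 1))⁆) (ξ ∘ finCongr (cast_pf p q)) := by
  rw [altS_equiv, ← altS_zsmul]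
  congr 1
  funext v
  have e1 : (braTuple v 0 1 ∘ (Fin.castAdd q t).cycleRange) ∘ Fin.castAdd q =
      braTuple ((v ∘ finCongr (cast_pf p q)) ∘ Fin.castAdd q) 0 1
        ∘ t.cycleRange := by
    funext i
    simp only [Function.comp_apply, braTuple_01_apply, cycleRange_val, Fin.val_castAdd]
    rfl
  have e2 : (braTuple v 0 1 ∘ (Fin.castAdd q t).cycleRange) ∘ Fin.natAdd p =
      (v ∘ finCongr (cast_pf p q)) ∘ Fin.natAdd (p + 1) := by
    funext i
    have hh : ((Fin.castAdd q t).cycleRange (Fin.natAdd p i) : ℕ) = p + i := by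
      rw [cycleRange_val]; simp; grind
    simp only [Function.comp_apply, braTuple_01_apply, hh]
    rw [if_neg (by have := t.isLt; omega)]
    congr 1
    ext
    simp
    omega
  rw [e1, e2, hω, Fin.sign_cycleRange]
  simp [smul_smul, neg_pow_mul_self]

theorem Y2_eq {L A : Type*} [LieRing L] [LieRing A] {p q : ℕ} (ω : (Fin p → L) → A)
    (τ : (Fin q → L) → A) (hτ : ∀ (σ : Perm (Fin q)) v, τ (v ∘ σ) = (Perm.sign σ : ℤ) • τ v)
    (ξ : Fin (p + q + 1) → L) (t : Fin q) :
    (-1 : ℤ) ^ (p + t : ℕ) • altS (fun v => ⁅ω ((braTuple v 0 1 ∘ (Fin.natAdd p t).cycleRange) ∘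
        Fin.castAdd q), τ ((braTuple v 0 1 ∘ (Fin.natAdd p t).cycleRange) ∘ Fin.natAdd p)⁆) ξ =
    (-1 : ℤ) ^ p • altS (fun v : Fin (p + (q + 1)) → L => ⁅ω (v ∘ Fin.castAdd (q + 1)),
      τ (braTuple (v ∘ Fin.natAdd p) 0 1)⁆) ξ := by
  have hq := t.isLt
  set c : Perm (Fin (p + (q + 1))) := (⟨p + 1, by omega⟩ : Fin (p + (q + 1))).cycleRange
  have hs : (Perm.sign (c * c) : ℤ) = 1 := by
    rw [Perm.sign_mul, Int.units_mul_self]; rfl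
  have hc := altS_perm (fun v : Fin (p + (q + 1)) → L => ⁅ω (v ∘ Fin.castAdd (q + 1)),
      τ (braTuple (v ∘ Fin.natAdd p) 0 1)⁆) (c * c) ξ
  rw [hs, one_smul] at hc
  have hcc : ∀ i, ((c * c) i : ℕ) = if (i : ℕ) < p then (i : ℕ) + 2 else if (i : ℕ) < p + 2 then
      i - p else i := by
    intro i
    simp only [c, Perm.mul_apply, cycleRange_val]
    grind
  rw [← hc, pow_add, ← smul_smul, ← altS_zsmul]
  congr 2
  funext v
  have e1 : (braTuple v 0 1 ∘ (Fin.natAdd p t).cycleRange) ∘ Fin.castAdd q =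
      (v ∘ (c * c)) ∘ Fin.castAdd (q + 1) := by
    funext i
    have hh : ((Fin.natAdd p t).cycleRange (Fin.castAdd q i) : ℕ) = i + 1 := by
      rw [cycleRange_val]; simp; grind
    simp only [Function.comp_apply, braTuple_01_apply, hh]
    rw [if_neg (by omega)]
    congr 1
    ext
    rw [hcc]
    simp
  have e2 : (braTuple v 0 1 ∘ (Fin.natAdd p t).cycleRange) ∘ Fin.natAdd p =
      braTuple ((v ∘ (c * c)) ∘ Fin.natAdd p) 0 1 ∘ t.cycleRange := by
    funext i
    have hh : ((Fin.natAdd p t).cycleRange (Fin.natAdd p i) : ℕ) =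
        if (t.cycleRange i : ℕ) = 0 then 0 else p + t.cycleRange i := by
      rw [cycleRange_val, cycleRange_val]; simp; grind
    simp only [Function.comp_apply, braTuple_01_apply, hh]
    by_cases h0 : (t.cycleRange i : ℕ) = 0
    · simp only [h0, if_true]
      congr 2 <;> ext <;> rw [hcc] <;> simp
    · simp only [h0, if_false]
      rw [if_neg (by omega)]
      congr 1
      ext
      rw [hcc]
      simp [h0]
      omega
  rw [e1, e2, hτ, Fin.sign_cycleRange]
  simp [smul_smul, neg_pow_mul_self]

theorem S_eq {L A : Type*} [LieRing L] [LieRing A] {p q : ℕ} (ω : (Fin p → L) → A)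
    (τ : (Fin q → L) → A) (hω : ∀ (σ : Perm (Fin p)) v, ω (v ∘ σ) = (Perm.sign σ : ℤ) • ω v)
    (hτ : ∀ (σ : Perm (Fin q)) v, τ (v ∘ σ) = (Perm.sign σ : ℤ) • τ v)
    (nω : ∀ w s, ω (Function.update w s (- w s)) = - ω w)
    (nτ : ∀ w s, τ (Function.update w s (- w s)) = - τ w)
    (ξ : Fin (p + q + 1) → L) :
    (2 : ℤ) • ∑ i : Fin (p + q + 1), ∑ j : Fin (p + q + 1),
      (if i < j then (-1 : ℤ) ^ ((i : ℕ) + (j : ℕ)) •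
      altS (fun v => ⁅ω (v ∘ Fin.castAdd q), τ (v ∘ Fin.natAdd p)⁆) (braTuple ξ i j) else 0) =
    - ((p : ℤ) • altS (fun v : Fin (p + 1 + q) → L => ⁅ω (braTuple (v ∘ Fin.castAdd q) 0 1),
      τ (v ∘ Fin.natAdd (p + 1))⁆) (ξ ∘ finCongr (cast_pf p q))
     + (q : ℤ) • (-1 : ℤ) ^ p • altS (fun v : Fin (p + (q + 1)) → L => ⁅ω (v ∘ Fin.castAdd (q + 1)),
      τ (braTuple (v ∘ Fin.natAdd p) 0 1)⁆) ξ) := by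
  rw [lemE, Fin.sum_univ_add]
  · simp only [Fin.val_castAdd, Fin.val_natAdd]
    simp only [Y1_eq ω τ hω, Y2_eq ω τ hτ]
    simp [← natCast_zsmul]
  · intro w s
    refine Fin.addCases (fun s => ?_) (fun s => ?_) s
    · rw [Function.update_comp_eq_of_injective _ (Fin.castAdd_injective p q),
        Function.update_comp_eq_of_forall_ne]
      · have := nω (w ∘ Fin.castAdd q) s
        simp only [Function.comp_apply] at this
        rw [this, neg_lie]
      · intro i h
        have := congrArg Fin.val h
        simp at this
        omega
    · rw [Function.update_comp_eq_of_injective _ (Fin.natAdd_injective q p),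
        Function.update_comp_eq_of_forall_ne]
      · have := nτ (w ∘ Fin.natAdd p) s
        simp only [Function.comp_apply] at this
        rw [this, lie_neg]
      · intro i h
        have := congrArg Fin.val h
        simp at this
        omega

theorem X1_eq {L A : Type*} [LieRing L] [LieRing A] {p q : ℕ} (D : L → A) (ω : (Fin p → L) → A)
    (τ : (Fin q → L) → A) (ξ : Fin (p + q + 1) → L) :
    altS (fun v : Fin (p + 1 + q) → L => ⁅⁅D (v (Fin.castAdd q 0)),
      ω (fun i => v (Fin.castAdd q i.succ))⁆, τ (v ∘ Fin.natAdd (p + 1))⁆)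
      (ξ ∘ finCongr (cast_pf p q)) =
    altS (fun v => ⁅⁅D (v 0), ω (fun i => v (Fin.castAdd q i).succ)⁆,
      τ (fun i => v (Fin.natAdd p i).succ)⁆) ξ := by
  rw [altS_equiv]
  congr 1
  funext v
  congr 2
  funext i
  simp only [Function.comp_apply]
  congr 1
  ext
  simp
  omega

theorem X2_eq {L A : Type*} [LieRing L] [LieRing A] {p q : ℕ} (D : L → A) (ω : (Fin p → L) → A)
    (τ : (Fin q → L) → A) (ξ : Fin (p + q + 1) → L) :
    (-1 : ℤ) ^ p • altS (fun v : Fin (p + (q + 1)) → L => ⁅ω (v ∘ Fin.castAdd (q + 1)),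
      ⁅D (v (Fin.natAdd p 0)), τ (fun i => v (Fin.natAdd p i.succ))⁆⁆) ξ =
    altS (fun v => ⁅ω (fun i => v (Fin.castAdd q i).succ),
      ⁅D (v 0), τ (fun i => v (Fin.natAdd p i).succ)⁆⁆) ξ := by
  set c : Perm (Fin (p + (q + 1))) := (⟨p, by omega⟩ : Fin (p + (q + 1))).cycleRange with hc0
  have hc := altS_perm (fun v : Fin (p + (q + 1)) → L => ⁅ω (v ∘ Fin.castAdd (q + 1)),
      ⁅D (v (Fin.natAdd p 0)), τ (fun i => v (Fin.natAdd p i.succ))⁆⁆) c ξ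
  have hs : (Perm.sign c : ℤ) = (-1) ^ p := by
    simp [hc0, Fin.sign_cycleRange]
  rw [← hs, ← hc]
  congr 1
  funext v
  have e1 : (v ∘ c) ∘ Fin.castAdd (q + 1) = fun i => v (Fin.castAdd q i).succ := by
    funext i
    simp only [Function.comp_apply]
    congr 1
    ext
    simp [c, cycleRange_val]
  have e2 : (v ∘ c) (Fin.natAdd p 0) = v 0 := by
    simp only [Function.comp_apply]
    congr 1
    ext
    simp [c, cycleRange_val]
  have e3 : (fun i : Fin q => (v ∘ c) (Fin.natAdd p i.succ)) =
      fun i => v (Fin.natAdd p i).succ := by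
    funext i
    simp only [Function.comp_apply]
    congr 1
    ext
    simp [c, cycleRange_val]
    omega
  rw [e1, e2, e3]

theorem covD_wedge {K L A : Type*} [Field K] [LieRing L] [LieRing A] [LieAlgebra K A]
    {p q : ℕ} (D : L → A) (ω : (Fin p → L) → A) (τ : (Fin q → L) → A) (c : K)
    (ξ : Fin (p + q + 1) → L) :
    covDRaw (fun x T => ⁅D x, T⁆) (fun w => c •
      altS (fun v => ⁅ω (v ∘ Fin.castAdd q), τ (v ∘ Fin.natAdd p)⁆) w) ξ =
    c • (altS (fun v => ⁅⁅D (v 0), ω (fun i => v (Fin.castAdd q i).succ)⁆,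
      τ (fun i => v (Fin.natAdd p i).succ)⁆) ξ +
     altS (fun v => ⁅ω (fun i => v (Fin.castAdd q i).succ),
      ⁅D (v 0), τ (fun i => v (Fin.natAdd p i).succ)⁆⁆) ξ +
     ∑ i : Fin (p + q + 1), ∑ j : Fin (p + q + 1),
      (if i < j then (-1 : ℤ) ^ ((i : ℕ) + (j : ℕ)) •
      altS (fun v => ⁅ω (v ∘ Fin.castAdd q), τ (v ∘ Fin.natAdd p)⁆) (braTuple ξ i j) else 0)) := by
  rw [← altS_add]
  simp only [← leibniz_lie]
  rw [altS_succ, covDRaw, smul_add]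
  congr 1
  · rw [Finset.smul_sum]
    refine Finset.sum_congr rfl fun i _ => ?_
    rw [lie_smul, smul_comm]
    congr 2
    simp only [altS, lie_sum, lie_zsmul]
    rfl
  · simp only [Finset.smul_sum, smul_ite, smul_zero]
    refine Finset.sum_congr rfl fun i _ => Finset.sum_congr rfl fun j _ => ?_
    split_ifs
    · rw [smul_comm]
    · rfl

theorem main_abs {K L A : Type*} [Field K] [CharZero K] [LieRing L] [LieRing A] [LieAlgebra K A]
    {p q : ℕ} (D : L → A) (ω : (Fin p → L) → A) (τ : (Fin q → L) → A)
    (hω : ∀ (σ : Perm (Fin p)) v, ω (v ∘ σ) = (Perm.sign σ : ℤ) • ω v)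
    (hτ : ∀ (σ : Perm (Fin q)) v, τ (v ∘ σ) = (Perm.sign σ : ℤ) • τ v)
    (nω : ∀ w s, ω (Function.update w s (- w s)) = - ω w)
    (nτ : ∀ w s, τ (Function.update w s (- w s)) = - τ w)
    (ξ : Fin (p + q + 1) → L) :
    covDRaw (fun x T => ⁅D x, T⁆) (fun w => ((p.factorial * q.factorial : ℕ) : K)⁻¹ •
      altS (fun v => ⁅ω (v ∘ Fin.castAdd q), τ (v ∘ Fin.natAdd p)⁆) w) ξ =
    (((p + 1).factorial * q.factorial : ℕ) : K)⁻¹ •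
      altS (fun v => ⁅covDRaw (fun x T => ⁅D x, T⁆) ω (v ∘ Fin.castAdd q),
        τ (v ∘ Fin.natAdd (p + 1))⁆) (ξ ∘ finCongr (cast_pf p q))
    + (-1 : ℤ) ^ p • ((p.factorial * (q + 1).factorial : ℕ) : K)⁻¹ •
      altS (fun v : Fin (p + (q + 1)) → L => ⁅ω (v ∘ Fin.castAdd (q + 1)),
        covDRaw (fun x T => ⁅D x, T⁆) τ (v ∘ Fin.natAdd p)⁆) ξ := by
  rw [covD_wedge]
  have hS := S_eq ω τ hω hτ nω nτ ξ
  have r1 := lemR (fun x T => ⁅D x, T⁆) ω (Fin.castAdd q)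
    (fun v : Fin (p + 1 + q) → L => 
      (AddMonoidHom.mk' (fun x : A => ⁅x, τ (v ∘ Fin.natAdd (p + 1))⁆) (fun a b => add_lie a b _))) ?_
    (ξ ∘ finCongr (cast_pf p q))
  have r2 := lemR (fun x T => ⁅D x, T⁆) τ (Fin.natAdd p)
    (fun v : Fin (p + (q + 1)) → L =>
      (AddMonoidHom.mk' (fun x : A => ⁅ω (v ∘ Fin.castAdd (q + 1)), x⁆)
        (fun a b => lie_add _ a b))) ?_ ξ
  · simp only [AddMonoidHom.mk'_apply] at r1 r2
    rw [X1_eq] at r1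
    have x2 := X2_eq D ω τ ξ
    rw [r1, r2, ← x2]
    set S := ∑ i : Fin (p + q + 1), ∑ j : Fin (p + q + 1),
      (if i < j then (-1 : ℤ) ^ ((i : ℕ) + (j : ℕ)) •
      altS (fun v => ⁅ω (v ∘ Fin.castAdd q), τ (v ∘ Fin.natAdd p)⁆) (braTuple ξ i j) else 0)
    generalize altS (fun v => ⁅⁅D (v 0), ω (fun i => v (Fin.castAdd q i).succ)⁆,
      τ (fun i => v (Fin.natAdd p i).succ)⁆) ξ = X1 at *
    generalize altS (fun v : Fin (p + (q + 1)) → L => ⁅ω (v ∘ Fin.castAdd (q + 1)),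
      ⁅D (v (Fin.natAdd p 0)), τ (fun i => v (Fin.natAdd p i.succ))⁆⁆) ξ = X2 at *
    generalize altS (fun v : Fin (p + 1 + q) → L => ⁅ω (braTuple (v ∘ Fin.castAdd q) 0 1),
      τ (v ∘ Fin.natAdd (p + 1))⁆) (ξ ∘ finCongr (cast_pf p q)) = Y1 at *
    generalize altS (fun v : Fin (p + (q + 1)) → L => ⁅ω (v ∘ Fin.castAdd (q + 1)),
      τ (braTuple (v ∘ Fin.natAdd p) 0 1)⁆) ξ = Y2 at *
    clear_value S
    clear r1 r2 x2
    have hp : (p.factorial : K) ≠ 0 := by exact_mod_cast p.factorial_ne_zero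
    have hq : (q.factorial : K) ≠ 0 := by exact_mod_cast q.factorial_ne_zero
    have hp1 : (p : K) + 1 ≠ 0 := by exact_mod_cast p.succ_ne_zero
    have hq1 : (q : K) + 1 ≠ 0 := by exact_mod_cast q.succ_ne_zero
    have hS' : S = (-(2⁻¹ : K)) • ((p : K) • Y1 + (q : K) • ((-1 : ℤ) ^ p : ℤ) • Y2) := by
      have : (2 : K) • S = -((p : K) • Y1 + (q : K) • ((-1 : ℤ) ^ p : ℤ) • Y2) := by
        have h2 : (2 : K) • S = (2 : ℤ) • S := by
          rw [← Int.cast_smul_eq_zsmul K]; norm_cast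
        rw [h2, hS]
        simp only [← Int.cast_smul_eq_zsmul K]
        norm_cast
      rw [neg_smul, ← smul_neg, ← this, smul_smul, inv_mul_cancel₀ two_ne_zero, one_smul]
    rw [hS']
    have c1 : (((p + 1).choose 2 : ℕ) : K) = (p + 1) * p / 2 := by
      rw [Nat.cast_choose_two]; push_cast; ring
    have c2 : (((q + 1).choose 2 : ℕ) : K) = (q + 1) * q / 2 := by
      rw [Nat.cast_choose_two]; push_cast; ring
    simp only [← Int.cast_smul_eq_zsmul K, Int.cast_natCast, c1, c2]
    push_cast [Nat.factorial_succ]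
    generalize ((-1 : K) ^ p) = e
    match_scalars <;> field_simp
  · intro ρ
    obtain ⟨ρ', h1, h2, h3⟩ := exists_permR p (q + 1) ρ
    refine ⟨ρ', h1, h3, fun v => ?_⟩
    ext x
    simp [Function.comp_def, h2]
  · intro ρ
    obtain ⟨ρ', h1, h2, h3⟩ := exists_permL (p + 1) q ρ
    refine ⟨ρ', h1, h2, fun v => ?_⟩
    ext x
    simp [Function.comp_def, h3]

theorem hcov_aux {K L M : Type*} [Field K] [LieRing L] [AddCommGroup M] [Module K M]
    (D : L → M → M) (D' : L → Module.End K M) (hD : ∀ x, ⇑(D' x) = D x) {k : ℕ}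
    (f : (Fin k → L) → Module.End K M) (u : Fin (k + 1) → L) :
    covDRaw (endCommRaw D) (fun v => ⇑(f v)) u = ⇑(covDRaw (fun x T => ⁅D' x, T⁆) f u) := by
  funext m
  simp only [covDRaw, endCommRaw, ← hD, Pi.add_apply, Finset.sum_apply, Pi.smul_apply,
    LinearMap.add_apply, LinearMap.sum_apply, LinearMap.smul_apply, Ring.lie_def,
    LinearMap.sub_apply, Module.End.mul_apply]
  congr 1
  refine Finset.sum_congr rfl fun i _ => Finset.sum_congr rfl fun j _ => ?_
  split_ifs <;> rfl

theorem hbr_aux {K L M : Type*} [Field K] [AddCommGroup M] [Module K M] {p q : ℕ}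
    (f : (Fin p → L) → Module.End K M) (g : (Fin q → L) → Module.End K M) (u : Fin (p + q) → L) :
    brWedgeRaw K (fun v => ⇑(f v)) (fun v => ⇑(g v)) u =
      ⇑(((p.factorial * q.factorial : ℕ) : K)⁻¹ •
        altS (fun v => ⁅f (v ∘ Fin.castAdd q), g (v ∘ Fin.natAdd p)⁆) u) := by
  funext m
  simp only [brWedgeRaw, altS, Finset.sum_apply, Pi.smul_apply,
    LinearMap.sum_apply, LinearMap.smul_apply, Ring.lie_def,
    LinearMap.sub_apply, Module.End.mul_apply]
  rfl

end Aux


/-- For an `L`-connection `∇` on `M` and `End_R(M)`-valued `p`- and `q`-forms `ω`, `τ`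
of `L`, the covariant exterior derivative of the induced connection `∇^End` satisfies
`d^{∇^End}[ω, τ] = [d^{∇^End} ω, τ] + (−1)^p [ω, d^{∇^End} τ]`. -/
theorem lieRinehart_covariant_derivative_graded_bracket_leibniz
    {K R L M : Type*} [Field K] [CharZero K] [CommRing R] [Algebra K R]
    [LieRing L] [Module R L] [Module K L] [IsScalarTower K R L] [LieAlgebra K L]
    [AddCommGroup M] [Module R M] [Module K M] [IsScalarTower K R M]
    (a : L →ₗ[R] Derivation K R R) (ha : IsLieRinehart a)
    (D : L → M → M) (hD : IsConnection a D)
    (p q : ℕ) (ω : AlternatingMap R L (Module.End R M) (Fin p))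
    (τ : AlternatingMap R L (Module.End R M) (Fin q)) :
    ∀ (ξ : Fin (p + q + 1) → L) (m : M),
      covDRaw (endCommRaw D) (brWedgeRaw K (fun v => ⇑(ω v)) (fun v => ⇑(τ v))) ξ m
        = brWedgeRaw K (covDRaw (endCommRaw D) (fun v => ⇑(ω v))) (fun v => ⇑(τ v))
            (fun i => ξ (Fin.cast (show p + 1 + q = p + q + 1 by omega) i)) m
          + ((-1 : ℤ) ^ p •
              brWedgeRaw K (fun v => ⇑(ω v)) (covDRaw (endCommRaw D) (fun v => ⇑(τ v))))
              ξ m := by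
  intro ξ m
  let D' : L → Module.End K M := fun x =>
    { toFun := D x, map_add' := hD.add_right x, map_smul' := fun c m => hD.smul_right_k c x m }
  have hD' : ∀ x, ⇑(D' x) = D x := fun x => rfl
  let ω' : (Fin p → L) → Module.End K M := fun v => (ω v).restrictScalars K
  let τ' : (Fin q → L) → Module.End K M := fun v => (τ v).restrictScalars K
  letI : LieRing (Module.End K M) := LieRing.ofAssociativeRing
  letI : LieAlgebra K (Module.End K M) := LieAlgebra.ofAssociativeAlgebra
  have main := main_abs (K := K) D' ω' τ'
    (by
      intro σ v
      ext x
      simp only [ω', AlternatingMap.map_perm]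
      rcases Int.units_eq_one_or (Equiv.Perm.sign σ) with h | h <;> simp [h])
    (by
      intro σ v
      ext x
      simp only [τ', AlternatingMap.map_perm]
      rcases Int.units_eq_one_or (Equiv.Perm.sign σ) with h | h <;> simp [h])
    (by
      intro w s
      ext x
      simp [ω', AlternatingMap.map_update_neg])
    (by
      intro w s
      ext x
      simp [τ', AlternatingMap.map_update_neg]) ξ
  have hω' : (fun v => ⇑(ω v)) = fun v => ⇑(ω' v) := rfl
  have hτ' : (fun v => ⇑(τ v)) = fun v => ⇑(τ' v) := rfl
  rw [hω', hτ']
  have c1 : covDRaw (endCommRaw D) (fun v => ⇑(ω' v)) = _ :=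
    funext fun u => hcov_aux D D' hD' ω' u
  have c2 : covDRaw (endCommRaw D) (fun v => ⇑(τ' v)) = _ :=
    funext fun u => hcov_aux D D' hD' τ' u
  have b1 : brWedgeRaw K (fun v => ⇑(ω' v)) (fun v => ⇑(τ' v)) = _ :=
    funext fun u => hbr_aux ω' τ' u
  rw [c1, c2, b1, hcov_aux D D' hD', main, Pi.smul_apply, hbr_aux, hbr_aux]
  rfl
end
end

section
/- Let ∇ be an L-connection on an R-module M. Then for every M-valued k-form ω of L, (d^∇∘d^∇)ω = μ(R^∇)ω, where R^∇ is the curvature of ∇; in particular, for an element s ∈ M (a 0-form), (d^∇(d^∇ s))(ξ, η) = R^∇(ξ, η)s for all ξ, η ∈ L. Consequently d^∇∘d^∇ = 0 on all M-valued forms if and only if ∇ is flat (R^∇ = 0). -/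
open scoped BigOperators

noncomputable section

/-- The curvature `R^∇(x,y) = ∇ₓ∘∇_y − ∇_y∘∇ₓ − ∇_{⁅x,y⁆}` of a connection. -/
def curvRaw {L M : Type*} [LieRing L] [AddCommGroup M] (D : L → M → M) (x y : L) :
    M → M := fun m => D x (D y m) - D y (D x m) - D ⁅x, y⁆ m

/-- The raw action `μ(A)` of an `End`-valued `2`-cochain `A` on an `M`-valued
`k`-cochain `ω`: `(μ(A)ω)(ξ₁,…,ξ_{k+2}) = (1/(2!·k!)) Σ_σ sign σ ·
A(ξ_{σ(1)}, ξ_{σ(2)})(ω(ξ_{σ(3)},…,ξ_{σ(k+2)}))`. -/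
def muRaw (K : Type*) {L M : Type*} [Field K] [AddCommGroup M] [Module K M] {k : ℕ}
    (A : L → L → (M → M)) (ω : (Fin k → L) → M) : (Fin (k + 2) → L) → M := fun ξ =>
  (((Nat.factorial 2 * Nat.factorial k : ℕ) : K))⁻¹ •
    ∑ σ : Equiv.Perm (Fin (k + 2)), (Equiv.Perm.sign σ : ℤ) •
      A (ξ (σ 0)) (ξ (σ 1)) (ω fun i => ξ (σ (i.addNat 2)))

namespace LRAux

variable {L M : Type*} [LieRing L] [AddCommGroup M]

def io {k : ℕ} (x : L) (ω : (Fin (k + 1) → L) → M) : (Fin k → L) → M :=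
  fun η => ω (Fin.cons x η)

omit [LieRing L] [AddCommGroup M] in
theorem ext_io {k : ℕ} {ω ω' : (Fin (k + 1) → L) → M} (h : ∀ x, io x ω = io x ω') : ω = ω' := by
  funext ξ
  have := congrFun (h (ξ 0)) (Fin.tail ξ)
  simpa [io, Fin.cons_self_tail] using this

def Alt : ∀ {k : ℕ}, ((Fin k → L) → M) → Prop
  | 0, _ => True
  | 1, ω => ∀ x y, io (x + y) ω = io x ω + io y ω
  | (_ + 2), ω => (∀ x, Alt (io x ω)) ∧ (∀ x y, io (x + y) ω = io x ω + io y ω) ∧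
      ∀ x, io x (io x ω) = 0

theorem Alt.io {k : ℕ} {ω : (Fin (k + 1) → L) → M} (h : Alt ω) (x : L) : Alt (io x ω) := by
  cases k with
  | zero => trivial
  | succ k => exact h.1 x

theorem Alt.add {k : ℕ} {ω : (Fin (k + 1) → L) → M} (h : Alt ω) (x y : L) :
    LRAux.io (x + y) ω = LRAux.io x ω + LRAux.io y ω := by
  cases k with
  | zero => exact h x y
  | succ k => exact h.2.1 x y

theorem Alt.swap {k : ℕ} {ω : (Fin (k + 2) → L) → M} (h : Alt ω) (x y : L) :
    LRAux.io x (LRAux.io y ω) = - LRAux.io y (LRAux.io x ω) := by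
  have h0 := h.2.2 (x + y)
  rw [h.add, (show ∀ z (a b : (Fin (k + 1) → L) → M), LRAux.io z (a + b) =
    LRAux.io z a + LRAux.io z b from fun _ _ _ => rfl), (h.io x).add, (h.io y).add,
    h.2.2, h.2.2] at h0
  rw [eq_neg_iff_add_eq_zero]
  rw [← h0]; abel

theorem alt_sub : ∀ {k : ℕ} {ω ω' : (Fin k → L) → M}, Alt ω → Alt ω' → Alt (ω - ω')
  | 0, _, _, _, _ => trivial
  | 1, ω, ω', h, h' => fun x y => by
      change io (x + y) ω - io (x + y) ω' = (io x ω - io x ω') + (io y ω - io y ω')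
      rw [h.add, h'.add]; abel
  | (k + 2), ω, ω', h, h' => by
      refine ⟨fun x => alt_sub (h.io x) (h'.io x), fun x y => ?_, fun x => ?_⟩
      · change io (x + y) ω - io (x + y) ω' = (io x ω - io x ω') + (io y ω - io y ω')
        rw [h.add, h'.add]; abel
      · change io x (io x ω) - io x (io x ω') = 0
        rw [h.2.2, h'.2.2, sub_zero]

def Li (D : L → M → M) (x : L) : ∀ {k : ℕ}, ((Fin k → L) → M) → (Fin k → L) → M
  | 0, ω => fun η => D x (ω η)
  | (_ + 1), ω => fun ξ => Li D x (io (ξ 0) ω) (Fin.tail ξ) - io ⁅x, ξ 0⁆ ω (Fin.tail ξ)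

theorem io_Li (D : L → M → M) (x y : L) {k : ℕ} (ω : (Fin (k + 1) → L) → M) :
    io y (Li D x ω) = Li D x (io y ω) - io ⁅x, y⁆ ω := by
  funext η
  simp [io, Li]

structure Bi (D : L → M → M) : Prop where
  l : ∀ x y m, D (x + y) m = D x m + D y m
  r : ∀ x m n, D x (m + n) = D x m + D x n

theorem Bi.zero {D : L → M → M} (h : Bi D) (x : L) : D x 0 = 0 := by
  simpa using h.r x 0 0

def Bi.hom {D : L → M → M} (h : Bi D) (x : L) : M →+ M := ⟨⟨D x, h.zero x⟩, h.r x⟩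

theorem Bi.sub {D : L → M → M} (h : Bi D) (x : L) (m n) : D x (m - n) = D x m - D x n :=
  (h.hom x).map_sub m n
theorem Bi.neg {D : L → M → M} (h : Bi D) (x : L) (m) : D x (-m) = - D x m :=
  (h.hom x).map_neg m
theorem Bi.zsmul {D : L → M → M} (h : Bi D) (x : L) (n : ℤ) (m) : D x (n • m) = n • D x m :=
  map_zsmul (h.hom x) n m

variable {D : L → M → M}

theorem Li_sub (h : Bi D) (x : L) : ∀ {k : ℕ} (ω ω' : (Fin k → L) → M),
    Li D x (ω - ω') = Li D x ω - Li D x ω'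
  | 0, _, _ => by funext η; simp [Li, h.sub]
  | (k + 1), ω, ω' => by
      apply ext_io; intro y
      change _ = io y (Li D x ω) - io y (Li D x ω')
      rw [io_Li, io_Li, io_Li]
      change Li D x (io y ω - io y ω') - (io _ ω - io _ ω') = _
      rw [Li_sub h]; abel

theorem Li_zero (h : Bi D) (x : L) {k : ℕ} : Li D x (0 : (Fin k → L) → M) = 0 := by
  simpa using Li_sub h x (0 : (Fin k → L) → M) 0

theorem Li_add (h : Bi D) (x : L) {k : ℕ} (ω ω' : (Fin k → L) → M) :
    Li D x (ω + ω') = Li D x ω + Li D x ω' := by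
  have := Li_sub h x (ω + ω') ω'
  rw [add_sub_cancel_right] at this
  rw [this]; abel

theorem Li_addl (h : Bi D) (x y : L) : ∀ {k : ℕ} {ω : (Fin k → L) → M}, Alt ω →
    Li D (x + y) ω = Li D x ω + Li D y ω
  | 0, _, _ => by funext η; simp [Li, h.l]
  | (k + 1), ω, hω => by
      apply ext_io; intro z
      change _ = io z (Li D x ω) + io z (Li D y ω)
      rw [io_Li, io_Li, io_Li, Li_addl h x y (hω.io z), add_lie, hω.add]; abel

theorem alt_Li (h : Bi D) (x : L) : ∀ {k : ℕ} {ω : (Fin k → L) → M}, Alt ω → Alt (Li D x ω)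
  | 0, _, _ => trivial
  | 1, ω, hω => fun y z => by
      rw [io_Li, io_Li, io_Li, hω.add, lie_add, hω.add, Li_add h]; abel
  | (k + 2), ω, hω => by
      refine ⟨fun y => ?_, fun y z => ?_, fun y => ?_⟩
      · rw [io_Li]; exact alt_sub (alt_Li h x (hω.io y)) (hω.io _)
      · rw [io_Li, io_Li, io_Li, hω.add, lie_add, hω.add, Li_add h]; abel
      · rw [io_Li]
        change io y (Li D x (io y ω)) - io y (io _ ω) = 0
        rw [io_Li, hω.2.2, Li_zero h, hω.swap y]; abel

theorem Li_Li (h : Bi D) (x y : L) : ∀ {k : ℕ} {ω : (Fin k → L) → M}, Alt ω →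
    Li D x (Li D y ω) - Li D y (Li D x ω) - Li D ⁅x, y⁆ ω = fun η => curvRaw D x y (ω η)
  | 0, _, _ => by funext η; simp [Li, curvRaw]
  | (k + 1), ω, hω => by
      apply ext_io; intro z
      change io z (Li D x (Li D y ω)) - io z (Li D y (Li D x ω)) - io z (Li D ⁅x, y⁆ ω) =
        fun η => curvRaw D x y ((io z ω) η)
      rw [← Li_Li h x y (hω.io z)]
      simp only [io_Li, Li_sub h]
      have : io ⁅x, ⁅y, z⁆⁆ ω = io ⁅⁅x, y⁆, z⁆ ω + io ⁅y, ⁅x, z⁆⁆ ω := by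
        rw [← hω.add, leibniz_lie]
      rw [this]; abel

/-- wedge with an operator -/
def wd (A : L → M → M) {k : ℕ} (ω : (Fin k → L) → M) : (Fin (k + 1) → L) → M := fun ξ =>
  ∑ i : Fin (k + 1), (-1 : ℤ) ^ (i : ℕ) • A (ξ i) (ω (ξ ∘ i.succAbove))

omit [LieRing L] in
theorem cons_succAbove {k : ℕ} (x : L) (η : Fin (k + 1) → L) (i : Fin (k + 1)) :
    (Fin.cons x η : Fin (k + 2) → L) ∘ i.succ.succAbove = Fin.cons x (η ∘ i.succAbove) := by
  funext m
  refine Fin.cases ?_ (fun m => ?_) m <;> simp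

omit [LieRing L] in
theorem io_wd (A : L → M → M) {k : ℕ} (x : L) (ω : (Fin (k + 1) → L) → M) :
    io x (wd A ω) = (fun η => A x (ω η)) - wd A (io x ω) := by
  funext η
  simp only [io, wd, Pi.sub_apply]
  rw [Fin.sum_univ_succ]
  simp only [cons_succAbove, Fin.cons_succ, Fin.val_succ, pow_succ, sub_eq_add_neg,
    ← Finset.sum_neg_distrib]
  congr 1
  · simp <;> rfl
  · refine Finset.sum_congr rfl fun i _ => ?_
    simp

omit [LieRing L] in
theorem io_wd0 (A : L → M → M) (x : L) (ω : (Fin 0 → L) → M) :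
    io x (wd A ω) = (fun η => A x (ω η)) := by
  funext η
  simp only [io, wd]
  simp

/-- the bracket part -/
def br {k : ℕ} (ω : (Fin k → L) → M) : (Fin (k + 1) → L) → M := fun ξ =>
  ∑ i : Fin (k + 1), ∑ j : Fin (k + 1),
        if i < j then (-1 : ℤ) ^ ((i : ℕ) + (j : ℕ)) • ω (braTuple ξ i j) else 0

theorem covD_eq {k : ℕ} (ω : (Fin k → L) → M) : covDRaw D ω = wd D ω + br ω := rfl

theorem bra_zero_s12 {k : ℕ} (x : L) (η : Fin (k + 1) → L) (j : Fin (k + 1)) :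
    braTuple (Fin.cons x η : Fin (k + 2) → L) 0 j.succ =
      Fin.cons ⁅x, η j⁆ (η ∘ j.succAbove) := by
  funext m
  refine Fin.cases ?_ (fun m => ?_) m
  · simp [braTuple]
  · simp only [braTuple, Fin.cons_succ, Function.comp]
    rw [← Fin.cons_succ (α := fun _ => L) x η (j.succAbove m)]
    simp only [Fin.val_succ, Nat.succ_ne_zero, if_false]
    congr 1
    ext
    simp only [Fin.succAbove, Fin.lt_def, Fin.val_succ, Fin.val_zero]
    by_cases hm : (m : ℕ) < j <;> simp [hm]

theorem bra_succ {k : ℕ} (x : L) (η : Fin (k + 2) → L) (i j : Fin (k + 2)) (hij : i < j) :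
    braTuple (Fin.cons x η : Fin (k + 3) → L) i.succ j.succ =
      Fin.cons ⁅η i, η j⁆ (Fin.cons x (Fin.tail (braTuple η i j))) := by
  funext m
  refine Fin.cases ?_ (fun m => ?_) m
  · simp [braTuple]
  · refine Fin.cases ?_ (fun m => ?_) m
    · simp [braTuple]
    · simp only [braTuple, Fin.cons_succ, Fin.tail]
      simp only [Fin.val_succ, Nat.succ_ne_zero, if_false]
      rw [← Fin.cons_succ (α := fun _ => L) x η]
      congr 1
      ext
      simp only [Fin.val_succ]
      split_ifs <;> omega

theorem bra_head {k : ℕ} (η : Fin (k + 2) → L) (i j : Fin (k + 2)) :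
    Fin.cons ⁅η i, η j⁆ (Fin.tail (braTuple η i j)) = braTuple η i j := by
  conv_rhs => rw [← Fin.cons_self_tail (braTuple η i j)]
  simp [braTuple]

/-- the insertion of brackets -/
def sb (x : L) {k : ℕ} (ω : (Fin (k + 1) → L) → M) : (Fin (k + 1) → L) → M := fun η =>
  ∑ j : Fin (k + 1), (-1 : ℤ) ^ (j : ℕ) • ω (Fin.cons ⁅x, η j⁆ (η ∘ j.succAbove))

theorem Li_eq (x : L) : ∀ {k : ℕ} {ω : (Fin (k + 1) → L) → M}, Alt ω →
    Li D x ω = (fun η => D x (ω η)) - sb x ω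
  | 0, ω, _ => by
      apply ext_io; intro y
      rw [io_Li]
      funext η
      simp [io, sb, Li]
  | (k + 1), ω, hω => by
      apply ext_io; intro y
      rw [io_Li, Li_eq x (hω.io y)]
      have : io y (sb x ω) = io ⁅x, y⁆ ω + sb x (io y ω) := by
        funext η
        simp only [io, sb, Pi.add_apply]
        rw [Fin.sum_univ_succ]
        simp only [cons_succAbove, Fin.cons_succ, Fin.val_succ, pow_succ]
        congr 1
        · simp <;> rfl
        · refine Finset.sum_congr rfl fun i _ => ?_
          have := congrFun (hω.swap y ⁅x, η i⁆) (η ∘ i.succAbove)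
          simp only [io, Pi.neg_apply] at this
          simp [this]
      change _ = (fun η => D x (io y ω η)) - io y (sb x ω)
      rw [this]; abel

theorem io_br (x : L) : ∀ {k : ℕ} {ω : (Fin (k + 1) → L) → M}, Alt ω →
    io x (br ω) = - sb x ω - br (io x ω) := by
  intro k ω hω
  funext η
  simp only [io, br, Pi.sub_apply, Pi.neg_apply, sb]
  rw [Fin.sum_univ_succ]
  rw [sub_eq_add_neg]
  congr 1
  · rw [Fin.sum_univ_succ]
    simp only [lt_irrefl, if_false, zero_add, Fin.succ_pos, if_true, bra_zero_s12]
    rw [← Finset.sum_neg_distrib]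
    refine Finset.sum_congr rfl fun i _ => ?_
    simp [pow_succ]
  · rw [← Finset.sum_neg_distrib]
    refine Finset.sum_congr rfl fun i _ => ?_
    rw [Fin.sum_univ_succ, ← Finset.sum_neg_distrib]
    simp only [Fin.not_lt_zero, if_false, zero_add, Fin.succ_lt_succ_iff]
    refine Finset.sum_congr rfl fun j _ => ?_
    split_ifs with hij
    · cases k with
      | zero => exact absurd hij (by omega)
      | succ k =>
        rw [bra_succ _ _ _ _ hij]
        rw [show ((i.succ : ℕ) + (j.succ : ℕ)) = (i + j : ℕ) + 2 by simp; ring, pow_add]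
        have h3 := congrFun (hω.swap x ⁅η i, η j⁆) (Fin.tail (braTuple η i j))
        simp only [io, Pi.neg_apply, bra_head] at h3
        rw [h3]
        simp
    · simp

theorem cartan {k : ℕ} (x : L) {ω : (Fin (k + 1) → L) → M} (hω : Alt ω) :
    io x (covDRaw D ω) = Li D x ω - covDRaw D (io x ω) := by
  rw [covD_eq, covD_eq, Li_eq x hω]
  change io x (wd D ω) + io x (br ω) = _
  rw [io_wd, io_br x hω]; abel

theorem cartan0 (x : L) (ω : (Fin 0 → L) → M) :
    io x (covDRaw D ω) = Li D x ω := by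
  rw [covD_eq]
  change io x (wd D ω) + io x (br ω) = _
  rw [io_wd0]
  funext η
  simp [io, br, Li]

theorem d_sub (h : Bi D) {k : ℕ} (ω ω' : (Fin k → L) → M) :
    covDRaw D (ω - ω') = covDRaw D ω - covDRaw D ω' := by
  funext ξ
  simp only [covDRaw, Pi.sub_apply, h.sub, smul_sub, Finset.sum_sub_distrib]
  have : ∀ i j : Fin (k + 1), (if i < j then (-1 : ℤ) ^ ((i : ℕ) + (j : ℕ)) • ω (braTuple ξ i j) -
      (-1 : ℤ) ^ ((i : ℕ) + (j : ℕ)) • ω' (braTuple ξ i j) else 0) =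
      (if i < j then (-1 : ℤ) ^ ((i : ℕ) + (j : ℕ)) • ω (braTuple ξ i j) else 0) -
      (if i < j then (-1 : ℤ) ^ ((i : ℕ) + (j : ℕ)) • ω' (braTuple ξ i j) else 0) := by
    intro i j; split_ifs <;> simp
  simp only [this, Finset.sum_sub_distrib]
  abel

theorem d_zero (h : Bi D) {k : ℕ} : covDRaw D (0 : (Fin k → L) → M) = 0 := by
  simpa using d_sub h (0 : (Fin k → L) → M) 0

theorem d_add (h : Bi D) {k : ℕ} (ω ω' : (Fin k → L) → M) :
    covDRaw D (ω + ω') = covDRaw D ω + covDRaw D ω' := by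
  have := d_sub h (ω + ω') ω'
  rw [add_sub_cancel_right] at this
  rw [this]; abel

theorem alt_d (h : Bi D) : ∀ {k : ℕ} {ω : (Fin k → L) → M}, Alt ω → Alt (covDRaw D ω)
  | 0, ω, hω => fun x y => by
      rw [cartan0, cartan0, cartan0, Li_addl h x y hω]
  | (k + 1), ω, hω => by
      refine ⟨fun x => ?_, fun x y => ?_, fun x => ?_⟩
      · rw [cartan x hω]
        exact alt_sub (alt_Li h x hω) (alt_d h (hω.io x))
      · rw [cartan _ hω, cartan _ hω, cartan _ hω, Li_addl h x y hω, hω.add, d_add h]; abel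
      · rw [cartan x hω]
        change io x (Li D x ω) - io x (covDRaw D (io x ω)) = 0
        have h0 : io (0 : L) ω = 0 := by simpa using hω.add 0 0
        rw [io_Li, lie_self, h0]
        cases k with
        | zero => rw [cartan0]; abel
        | succ k => rw [cartan x (hω.io x), hω.2.2, d_zero h]; abel

theorem Li_d (h : Bi D) (x : L) : ∀ {k : ℕ} {ω : (Fin k → L) → M}, Alt ω →
    Li D x (covDRaw D ω) - covDRaw D (Li D x ω) = wd (curvRaw D x) ω
  | 0, ω, hω => by
      apply ext_io; intro y
      change io y (Li D x (covDRaw D ω)) - io y (covDRaw D (Li D x ω)) = _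
      rw [io_Li, io_wd0, cartan0, cartan0, cartan0, ← Li_Li h x y hω]; abel
  | (k + 1), ω, hω => by
      apply ext_io; intro y
      change io y (Li D x (covDRaw D ω)) - io y (covDRaw D (Li D x ω)) = _
      rw [io_Li, io_wd, cartan _ hω, cartan _ hω, cartan _ (alt_Li h x hω), ← Li_Li h x y hω,
        ← Li_d h x (hω.io y), io_Li, d_sub h, Li_sub h]; abel

theorem io_dd0 (h : Bi D) (x : L) (ω : (Fin 0 → L) → M) :
    io x (covDRaw D (covDRaw D ω)) = wd (curvRaw D x) ω := by
  have hω : Alt ω := trivial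
  rw [cartan x (alt_d h hω), cartan0, Li_d h x hω]

theorem io_dd (h : Bi D) (x : L) {k : ℕ} {ω : (Fin (k + 1) → L) → M} (hω : Alt ω) :
    io x (covDRaw D (covDRaw D ω)) =
      wd (curvRaw D x) ω + covDRaw D (covDRaw D (io x ω)) := by
  rw [cartan x (alt_d h hω), cartan x hω, d_sub h, ← Li_d h x hω]; abel

/-- double wedge -/
def W (D : L → M → M) {k : ℕ} (ω : (Fin k → L) → M) : (Fin (k + 2) → L) → M := fun ξ =>
  ∑ i : Fin (k + 2), (-1 : ℤ) ^ (i : ℕ) • wd (curvRaw D (ξ i)) ω (ξ ∘ i.succAbove)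

theorem io_W' (x : L) {k : ℕ} (ω : (Fin k → L) → M) (η : Fin (k + 1) → L) :
    io x (W D ω) η = wd (curvRaw D x) ω η -
      ∑ i : Fin (k + 1), (-1 : ℤ) ^ (i : ℕ) • io x (wd (curvRaw D (η i)) ω) (η ∘ i.succAbove) := by
  simp only [io, W]
  rw [Fin.sum_univ_succ]
  simp only [cons_succAbove, Fin.cons_succ, Fin.val_succ, pow_succ, sub_eq_add_neg,
    ← Finset.sum_neg_distrib]
  congr 1
  · simp <;> rfl
  · refine Finset.sum_congr rfl fun i _ => ?_
    simp

theorem curv_swap (h : Bi D) (x y : L) (m : M) : curvRaw D y x m = - curvRaw D x y m := by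
  have h0 : D 0 m = 0 := by simpa using h.l 0 0 m
  have : D ⁅y, x⁆ m = - D ⁅x, y⁆ m := by
    rw [eq_neg_iff_add_eq_zero, ← h.l, ← lie_skew, neg_add_cancel, h0]
  simp only [curvRaw, this]; abel

theorem two_dd (h : Bi D) : ∀ {k : ℕ} {ω : (Fin k → L) → M}, Alt ω →
    W D ω = (2 : ℤ) • covDRaw D (covDRaw D ω)
  | 0, ω, hω => by
      apply ext_io; intro x
      change _ = (2 : ℤ) • io x (covDRaw D (covDRaw D ω))
      rw [io_dd0 h]
      funext η
      rw [io_W']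
      simp only [io_wd0, curv_swap h x]
      simp only [wd, Pi.smul_apply, smul_neg, Finset.sum_neg_distrib, two_smul]
      abel
  | (k + 1), ω, hω => by
      apply ext_io; intro x
      change _ = (2 : ℤ) • io x (covDRaw D (covDRaw D ω))
      rw [io_dd h x hω, smul_add, ← two_dd h (hω.io x)]
      funext η
      rw [io_W']
      simp only [io_wd, curv_swap h x, Pi.sub_apply, smul_sub, Finset.sum_sub_distrib]
      simp only [wd, W, Pi.smul_apply, Pi.add_apply, smul_neg, Finset.sum_neg_distrib, two_smul]
      abel

theorem sum_perm {n : ℕ} (F : (Fin (n + 1) → Fin (n + 1)) → M) :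
    ∑ σ : Equiv.Perm (Fin (n + 1)), (Equiv.Perm.sign σ : ℤ) • F σ =
      ∑ i : Fin (n + 1), (-1 : ℤ) ^ (i : ℕ) • ∑ τ : Equiv.Perm (Fin n),
        (Equiv.Perm.sign τ : ℤ) • F (Fin.cons i (i.succAbove ∘ τ)) := by
  simp only [Finset.smul_sum, smul_smul]
  rw [← Fintype.sum_prod_type' (f := fun (i : Fin (n + 1)) (τ : Equiv.Perm (Fin n)) =>
    ((-1 : ℤ) ^ (i : ℕ) * (Equiv.Perm.sign τ : ℤ)) • F (Fin.cons i (i.succAbove ∘ τ)))]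
  symm
  let e : Fin (n + 1) × Equiv.Perm (Fin n) → Equiv.Perm (Fin (n + 1)) := fun p =>
    (Fin.cycleRange p.1).symm * Equiv.Perm.decomposeFin.symm (0, p.2)
  have he : ∀ p, (e p : Fin (n + 1) → Fin (n + 1)) = Fin.cons p.1 (p.1.succAbove ∘ p.2) := by
    intro p
    funext m
    refine Fin.cases ?_ (fun m => ?_) m
    · simp [e]
    · simp [e]
  have hinj : Function.Injective e := by
    intro p q hpq
    have h1 := (he p).symm.trans ((congrArg _ hpq).trans (he q))
    obtain ⟨h2, h3⟩ := Fin.cons_injective2 h1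
    obtain ⟨p1, p2⟩ := p
    obtain ⟨q1, q2⟩ := q
    simp only at h2 h3
    subst h2
    congr 1
    ext m : 1
    exact Fin.succAbove_right_injective (congrFun h3 m)
  have hbij : Function.Bijective e := by
    rw [Fintype.bijective_iff_injective_and_card]
    refine ⟨hinj, ?_⟩
    simp [Fintype.card_perm, Nat.factorial_succ]
  refine Fintype.sum_bijective e hbij _ _ fun p => ?_
  rw [he]
  congr 1
  simp [e]

theorem sum_mu {k : ℕ} (h : Bi D) (ω : (Fin k → L) → M)
    (hω : ∀ (v : Fin k → L) (τ : Equiv.Perm (Fin k)), ω (v ∘ τ) = (Equiv.Perm.sign τ : ℤ) • ω v)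
    (ξ : Fin (k + 2) → L) :
    ∑ σ : Equiv.Perm (Fin (k + 2)), (Equiv.Perm.sign σ : ℤ) •
      curvRaw D (ξ (σ 0)) (ξ (σ 1)) (ω fun i => ξ (σ (i.addNat 2))) =
    (Nat.factorial k) • W D ω ξ := by
  have hz : ∀ (x y : L) (n : ℤ) (m : M), curvRaw D x y (n • m) = n • curvRaw D x y m := by
    intro x y n m
    simp only [curvRaw, h.zsmul, smul_sub]
  rw [sum_perm (fun s => curvRaw D (ξ (s 0)) (ξ (s 1)) (ω fun i => ξ (s (i.addNat 2))))]
  simp only [W, wd, Finset.smul_sum]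
  refine Finset.sum_congr rfl fun i _ => ?_
  rw [← Finset.smul_sum]
  have := sum_perm (n := k) (fun s => curvRaw D (ξ i) (ξ (i.succAbove (s 0)))
    (ω fun m => ξ (i.succAbove (s m.succ))))
  have h1 : ∀ (τ : Equiv.Perm (Fin (k + 1))),
      curvRaw D (ξ ((Fin.cons i (i.succAbove ∘ τ) : Fin (k + 2) → Fin (k + 2)) 0))
        (ξ ((Fin.cons i (i.succAbove ∘ τ) : Fin (k + 2) → Fin (k + 2)) 1))
        (ω fun m => ξ ((Fin.cons i (i.succAbove ∘ τ) : Fin (k + 2) → Fin (k + 2)) (m.addNat 2))) =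
      curvRaw D (ξ i) (ξ (i.succAbove (τ 0))) (ω fun m => ξ (i.succAbove (τ m.succ))) :=
    fun τ => rfl
  simp only [h1]
  rw [this, Finset.smul_sum]
  refine Finset.sum_congr rfl fun j _ => ?_
  rw [smul_comm (Nat.factorial k), smul_comm (Nat.factorial k)]
  congr 2
  have h2 : ∀ τ : Equiv.Perm (Fin k), (Equiv.Perm.sign τ : ℤ) • curvRaw D (ξ i)
      (ξ (i.succAbove ((Fin.cons j (j.succAbove ∘ τ) : Fin (k + 1) → Fin (k + 1)) 0)))
      (ω fun m => ξ (i.succAbove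
        ((Fin.cons j (j.succAbove ∘ τ) : Fin (k + 1) → Fin (k + 1)) m.succ))) =
      curvRaw D (ξ i) ((ξ ∘ i.succAbove) j) (ω ((ξ ∘ i.succAbove) ∘ j.succAbove)) := by
    intro τ
    have := hω ((ξ ∘ i.succAbove) ∘ j.succAbove) τ
    change (Equiv.Perm.sign τ : ℤ) • curvRaw D (ξ i) ((ξ ∘ i.succAbove) j)
      (ω (((ξ ∘ i.succAbove) ∘ j.succAbove) ∘ τ)) = _
    rw [this, hz, smul_smul, ← Units.val_mul, Int.units_mul_self]
    simp
  simp only [h2]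
  simp [Fintype.card_perm]

theorem alt_coe {R : Type*} [CommRing R] [Module R L] [Module R M] :
    ∀ {k : ℕ} (ω : AlternatingMap R L M (Fin k)), Alt (⇑ω)
  | 0, _ => trivial
  | 1, ω => fun x y => by
      funext η
      exact congrArg (fun f => f η) (ω.curryLeft.map_add x y)
  | (k + 2), ω => by
      refine ⟨fun x => alt_coe (ω.curryLeft x), fun x y => ?_, fun x => ?_⟩
      · funext η
        exact congrArg (fun f => f η) (ω.curryLeft.map_add x y)
      · funext η
        exact ω.map_eq_zero_of_eq _ (i := 0) (j := 1) rfl (by simp)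

end LRAux

/-- For an `L`-connection `∇` on `M`: `(d^∇ ∘ d^∇) ω = μ(R^∇) ω` for every `M`-valued
`k`-form `ω`; in particular `(d^∇(d^∇ s))(ξ, η) = R^∇(ξ, η) s` for `s ∈ M`; and
`d^∇ ∘ d^∇ = 0` on all `M`-valued forms if and only if `∇` is flat (`R^∇ = 0`). -/
theorem lieRinehart_covariant_derivative_squared_eq_curvature
    {K R L M : Type*} [Field K] [CharZero K] [CommRing R] [Algebra K R]
    [LieRing L] [Module R L] [Module K L] [IsScalarTower K R L] [LieAlgebra K L]
    [AddCommGroup M] [Module R M] [Module K M] [IsScalarTower K R M]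
    (a : L →ₗ[R] Derivation K R R) (ha : IsLieRinehart a)
    (D : L → M → M) (hD : IsConnection a D) :
    (∀ (k : ℕ) (ω : AlternatingMap R L M (Fin k)) (ξ : Fin (k + 2) → L),
        covDRaw D (covDRaw D ⇑ω) ξ = muRaw K (curvRaw D) ⇑ω ξ)
      ∧ (∀ (s : M) (x y : L),
          covDRaw D (covDRaw D (fun _ : Fin 0 → L => s)) ![x, y] = curvRaw D x y s)
      ∧ ((∀ (k : ℕ) (ω : AlternatingMap R L M (Fin k)) (ξ : Fin (k + 2) → L),
            covDRaw D (covDRaw D ⇑ω) ξ = 0)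
          ↔ ∀ (x y : L) (m : M), curvRaw D x y m = 0) := by
  have h : LRAux.Bi D := ⟨hD.add_left, hD.add_right⟩
  have h1 : ∀ (k : ℕ) (ω : AlternatingMap R L M (Fin k)) (ξ : Fin (k + 2) → L),
        covDRaw D (covDRaw D ⇑ω) ξ = muRaw K (curvRaw D) ⇑ω ξ := by
    intro k ω ξ
    unfold muRaw
    rw [LRAux.sum_mu h (⇑ω) (fun v τ => by
      rw [AlternatingMap.map_perm]; rfl), LRAux.two_dd h (LRAux.alt_coe ω)]
    rw [eq_inv_smul_iff₀ (by exact_mod_cast Nat.mul_ne_zero (Nat.factorial_ne_zero 2) (Nat.factorial_ne_zero k))]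
    rw [Nat.cast_smul_eq_nsmul, mul_comm, mul_smul]
    congr 1
    simp [Nat.factorial, two_smul]
  have h2 : ∀ (s : M) (x y : L),
          covDRaw D (covDRaw D (fun _ : Fin 0 → L => s)) ![x, y] = curvRaw D x y s := by
    intro s x y
    have := congrFun (LRAux.io_dd0 h x (fun _ : Fin 0 → L => s)) ![y]
    refine this.trans ?_
    simp [LRAux.wd]
  refine ⟨h1, h2, fun H x y m => ?_, fun H k ω ξ => ?_⟩
  · rw [← h2]
    exact H 0 (AlternatingMap.constOfIsEmpty R L (Fin 0) m) _
  · rw [h1]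
    simp [muRaw, H]
end
end

section
/- Let X be a topological space and let A be a finite-dimensional ℝ-subalgebra (a linear subspace closed under pointwise multiplication, not required to contain the constant function 1) of the algebra of continuous functions X → ℝ. Then every f ∈ A is locally constant. -/
/-- Let `X` be a topological space and `A` a finite-dimensional `ℝ`-subalgebra
(a linear subspace closed under pointwise multiplication, not required to contain the
constant function `1`) of the algebra of continuous functions `X → ℝ`. Then every
`f ∈ A` is locally constant. -/
theorem locallyConstant_of_mem_finiteDimensional_subalgebra
    {X : Type*} [TopologicalSpace X] (A : Submodule ℝ C(X, ℝ))
    (hmul : ∀ f ∈ A, ∀ g ∈ A, f * g ∈ A) (hfd : FiniteDimensional ℝ A) :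
    ∀ f ∈ A, IsLocallyConstant (⇑f) := by
  intro f hf
  have hmem : ∀ p : Polynomial ℝ, Polynomial.aeval f (Polynomial.X * p) ∈ A := by
    intro p
    induction p using Polynomial.induction_on' with
    | add p q hp hq =>
      rw [mul_add, map_add]
      exact A.add_mem hp hq
    | monomial n a =>
      have hpow : ∀ n : ℕ, f ^ (n + 1) ∈ A := by
        intro n
        induction n with
        | zero => simpa using hf
        | succ k ih =>
          rw [pow_succ]
          exact hmul _ ih _ hf
      rw [Polynomial.X_mul_monomial, Polynomial.aeval_monomial, ← Algebra.smul_def]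
      exact A.smul_mem _ (hpow n)
  let φ : Polynomial ℝ →ₗ[ℝ] A :=
    ((Polynomial.aeval f).toLinearMap ∘ₗ LinearMap.mulLeft ℝ Polynomial.X).codRestrict A hmem
  have hφ : ¬ Function.Injective φ := fun h =>
    Polynomial.not_finite (Module.Finite.of_injective φ h)
  obtain ⟨p, hp, hp0⟩ : ∃ p, φ p = 0 ∧ p ≠ 0 := by
    by_contra! h
    exact hφ ((injective_iff_map_eq_zero φ).2 h)
  have hev : Polynomial.aeval f (Polynomial.X * p) = 0 := congrArg Subtype.val hp
  have hq0 : Polynomial.X * p ≠ 0 := mul_ne_zero Polynomial.X_ne_zero hp0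
  have hroot : ∀ x, (Polynomial.X * p).IsRoot (f x) := by
    intro x
    have h1 := congrArg (ContinuousMap.evalAlgHom ℝ ℝ x) hev
    rw [← Polynomial.aeval_algHom_apply, map_zero] at h1
    simpa [Polynomial.IsRoot] using h1
  have hfin : (Set.range f).Finite :=
    (Polynomial.finite_setOfPred_isRoot hq0).subset (by rintro _ ⟨x, rfl⟩; exact hroot x)
  have : Finite (Set.range f) := hfin
  have hc : Continuous (Set.rangeFactorization f) := f.continuous.subtype_mk _
  exact ((IsLocallyConstant.iff_continuous _).2 hc).comp Subtype.val
end
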